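/- Let q_e : 𝕋_L → ℝ be smooth and positive, ω₀ > 0, and let Q, F, G be smooth on 𝕋_L × [0,∞) with smooth b : 𝕋_L → ℝ satisfying the linear Prandtl problem ∂_s Q − ω₀ q_e(s) ∂_ψ² Q = F + ∂_ψ² G on 𝕋_L × (0,∞), Q(s,0) = b(s), Q(s,ψ) → 0 as ψ → ∞, with the decay conditions ∫₀^L q_e Q ds → 0 and ∂_ψ ∫₀^L q_e Q ds → 0 and ∫₀^L G ds → 0 as ψ → ∞. Assume the data satisfy the Feynman–Lagerstrom compatibility condition: ∫₀^L q_e(s) b(s) ds = −(1/ω₀)( ∫₀^∞ y ∫₀^L F(s,y) ds dy + ∫₀^L G(s,0) ds ). Then for all integers k, m ≥ 0 there is a constant C (depending on k, m, L, ω₀, q_e) such that ‖Q‖_{X_{k,m}} ≤ C ( Σ_{k'=0}^{k} ‖⟨ψ⟩^{m+4} ∂_s^{k'} F‖_{L²} + Σ_{k'=0}^{k} Σ_{j=0}^{2} ‖⟨ψ⟩^{m} ∂_s^{k'} ∂_ψ^{j} G‖_{L²} + ‖b‖_{H^{k+1}(𝕋_L)} ), provided the right-hand side is finite. -/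

import Mathlib

open MeasureTheory Set Function Filter

/-- `k`-th partial derivative in the tangential variable `s` of a function on
`𝕋_L × [0,∞)` (represented as a curried function `ℝ → ℝ → ℝ`). -/
noncomputable def dS (k : ℕ) (h : ℝ → ℝ → ℝ) : ℝ → ℝ → ℝ :=
  fun s ψ => iteratedDeriv k (fun s' => h s' ψ) s

/-- `j`-th partial derivative in the normal (von Mises) variable `ψ`. -/
noncomputable def dPsi (j : ℕ) (h : ℝ → ℝ → ℝ) : ℝ → ℝ → ℝ :=
  fun s ψ => iteratedDeriv j (fun ψ' => h s ψ') ψ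

/-- Squared `L²` norm over `𝕋_L × ℝ₊` (fundamental domain `(0,L] × (0,∞)`). -/
noncomputable def L2sq (L : ℝ) (h : ℝ → ℝ → ℝ) : ℝ :=
  ∫ p in Ioc (0:ℝ) L ×ˢ Ioi (0:ℝ), (h p.1 p.2) ^ 2

/-- Square-integrability over `𝕋_L × ℝ₊`. -/
def FiniteL2 (L : ℝ) (h : ℝ → ℝ → ℝ) : Prop :=
  IntegrableOn (fun p : ℝ × ℝ => (h p.1 p.2) ^ 2) (Ioc (0:ℝ) L ×ˢ Ioi (0:ℝ))

/-- The weight `⟨ψ⟩^m h`. -/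
noncomputable def wt (m : ℕ) (h : ℝ → ℝ → ℝ) : ℝ → ℝ → ℝ :=
  fun s ψ => (1 + ψ) ^ m * h s ψ

/-- Squared `X_{k,m}` norm:
`‖h‖²_{X_{k,m}} = Σ_{k'≤k} Σ_{m'≤m} (‖⟨ψ⟩^{m'}∂_s^{k'}h‖² + ‖⟨ψ⟩^{m'}∂_s^{k'+1}h‖²
+ ‖⟨ψ⟩^{m'}∂_ψ∂_s^{k'}h‖² + ‖⟨ψ⟩^{m'}∂_ψ²∂_s^{k'}h‖²)`. -/
noncomputable def XnormSq (L : ℝ) (k m : ℕ) (h : ℝ → ℝ → ℝ) : ℝ :=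
  ∑ k' ∈ Finset.range (k+1), ∑ m' ∈ Finset.range (m+1),
    (L2sq L (wt m' (dS k' h)) + L2sq L (wt m' (dS (k'+1) h))
      + L2sq L (wt m' (dPsi 1 (dS k' h))) + L2sq L (wt m' (dPsi 2 (dS k' h))))

/-- The `X_{k,m}` norm. -/
noncomputable def Xnorm (L : ℝ) (k m : ℕ) (h : ℝ → ℝ → ℝ) : ℝ :=
  Real.sqrt (XnormSq L k m h)

/-- Membership in the space `X_{k,m}`: all the defining integrands are integrable. -/
def XFinite (L : ℝ) (k m : ℕ) (h : ℝ → ℝ → ℝ) : Prop :=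
  ∀ k' ≤ k, ∀ m' ≤ m,
    FiniteL2 L (wt m' (dS k' h)) ∧ FiniteL2 L (wt m' (dS (k'+1) h))
      ∧ FiniteL2 L (wt m' (dPsi 1 (dS k' h))) ∧ FiniteL2 L (wt m' (dPsi 2 (dS k' h)))

/-- Joint smoothness of a curried function of two real variables. -/
def Smooth2 (h : ℝ → ℝ → ℝ) : Prop :=
  ContDiff ℝ (⊤ : ℕ∞) (fun p : ℝ × ℝ => h p.1 p.2)

/-- Periodicity in the first (tangential) variable. -/
def PeriodicS (L : ℝ) (h : ℝ → ℝ → ℝ) : Prop :=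
  ∀ ψ : ℝ, Function.Periodic (fun s => h s ψ) L

/-- Squared `H^n` norm of a function on `𝕋_L`. -/
noncomputable def HnormSq (L : ℝ) (n : ℕ) (b : ℝ → ℝ) : ℝ :=
  ∑ j ∈ Finset.range (n+1), ∫ s in (0:ℝ)..L, (iteratedDeriv j b s) ^ 2


/-! ### Calculus of `dS` and `dPsi` -/

theorem Smooth2.cont {h : ℝ → ℝ → ℝ} (hh : Smooth2 h) :
    Continuous (fun p : ℝ × ℝ => h p.1 p.2) := ContDiff.continuous hh

theorem Smooth2.slS {h : ℝ → ℝ → ℝ} (hh : Smooth2 h) (ψ : ℝ) :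
    ContDiff ℝ (⊤ : ℕ∞) (fun s => h s ψ) := by
  have : ContDiff ℝ (⊤ : ℕ∞) (fun s : ℝ => ((s, ψ) : ℝ × ℝ)) := by fun_prop
  exact ContDiff.comp hh this

theorem Smooth2.slP {h : ℝ → ℝ → ℝ} (hh : Smooth2 h) (s : ℝ) :
    ContDiff ℝ (⊤ : ℕ∞) (fun ψ => h s ψ) := by
  have : ContDiff ℝ (⊤ : ℕ∞) (fun ψ : ℝ => ((s, ψ) : ℝ × ℝ)) := by fun_prop
  exact ContDiff.comp (g := fun p : ℝ × ℝ => h p.1 p.2) hh this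

theorem Smooth2.fd {h : ℝ → ℝ → ℝ} (hh : Smooth2 h) (p : ℝ × ℝ) :
    HasFDerivAt (fun p : ℝ × ℝ => h p.1 p.2)
      (fderiv ℝ (fun p : ℝ × ℝ => h p.1 p.2) p) p :=
  ((ContDiff.differentiable hh (by simp)) p).hasFDerivAt

theorem Smooth2.hS' {h : ℝ → ℝ → ℝ} (hh : Smooth2 h) (s ψ : ℝ) :
    HasDerivAt (fun s => h s ψ)
      (fderiv ℝ (fun p : ℝ × ℝ => h p.1 p.2) (s, ψ) (1, 0)) s := by
  have h1 : HasDerivAt (fun s : ℝ => ((s, ψ) : ℝ × ℝ)) ((1, 0) : ℝ × ℝ) s :=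
    (hasDerivAt_id s).prodMk (hasDerivAt_const s ψ)
  exact (hh.fd (s, ψ)).comp_hasDerivAt s h1

theorem Smooth2.hP' {h : ℝ → ℝ → ℝ} (hh : Smooth2 h) (s ψ : ℝ) :
    HasDerivAt (fun ψ => h s ψ)
      (fderiv ℝ (fun p : ℝ × ℝ => h p.1 p.2) (s, ψ) (0, 1)) ψ := by
  have h1 : HasDerivAt (fun ψ : ℝ => ((s, ψ) : ℝ × ℝ)) ((0, 1) : ℝ × ℝ) ψ :=
    (hasDerivAt_const ψ s).prodMk (hasDerivAt_id ψ)
  exact (hh.fd (s, ψ)).comp_hasDerivAt ψ h1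

theorem dS_one_eq (h : ℝ → ℝ → ℝ) (s ψ : ℝ) : dS 1 h s ψ = deriv (fun s' => h s' ψ) s := by
  simp [dS, iteratedDeriv_one]

theorem dPsi_one_eq (h : ℝ → ℝ → ℝ) (s ψ : ℝ) : dPsi 1 h s ψ = deriv (fun t => h s t) ψ := by
  simp [dPsi, iteratedDeriv_one]

theorem dS_one_fd {h : ℝ → ℝ → ℝ} (hh : Smooth2 h) (s ψ : ℝ) :
    dS 1 h s ψ = fderiv ℝ (fun p : ℝ × ℝ => h p.1 p.2) (s, ψ) (1, 0) := by
  rw [dS_one_eq]; exact (hh.hS' s ψ).deriv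

theorem dPsi_one_fd {h : ℝ → ℝ → ℝ} (hh : Smooth2 h) (s ψ : ℝ) :
    dPsi 1 h s ψ = fderiv ℝ (fun p : ℝ × ℝ => h p.1 p.2) (s, ψ) (0, 1) := by
  rw [dPsi_one_eq]; exact (hh.hP' s ψ).deriv

theorem Smooth2.hS {h : ℝ → ℝ → ℝ} (hh : Smooth2 h) (s ψ : ℝ) :
    HasDerivAt (fun s => h s ψ) (dS 1 h s ψ) s := by
  rw [dS_one_fd hh]; exact hh.hS' s ψ

theorem Smooth2.hP {h : ℝ → ℝ → ℝ} (hh : Smooth2 h) (s ψ : ℝ) :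
    HasDerivAt (fun ψ => h s ψ) (dPsi 1 h s ψ) ψ := by
  rw [dPsi_one_fd hh]; exact hh.hP' s ψ

theorem dS_zero (h : ℝ → ℝ → ℝ) : dS 0 h = h := by
  funext s ψ; simp [dS]

theorem dPsi_zero (h : ℝ → ℝ → ℝ) : dPsi 0 h = h := by
  funext s ψ; simp [dPsi]

theorem dS_succ (k : ℕ) (h : ℝ → ℝ → ℝ) : dS (k+1) h = dS 1 (dS k h) := by
  funext s ψ
  rw [dS_one_eq]
  simp only [dS, iteratedDeriv_succ]

theorem dPsi_succ (k : ℕ) (h : ℝ → ℝ → ℝ) : dPsi (k+1) h = dPsi 1 (dPsi k h) := by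
  funext s ψ
  rw [dPsi_one_eq]
  simp only [dPsi, iteratedDeriv_succ]

theorem Smooth2.dS1 {h : ℝ → ℝ → ℝ} (hh : Smooth2 h) : Smooth2 (dS 1 h) := by
  have h1 : ContDiff ℝ (⊤ : ℕ∞) (fderiv ℝ (fun p : ℝ × ℝ => h p.1 p.2)) :=
    ContDiff.fderiv_right hh (by simp)
  have h2 : ContDiff ℝ (⊤ : ℕ∞)
      (fun p : ℝ × ℝ => fderiv ℝ (fun p : ℝ × ℝ => h p.1 p.2) p (1, 0)) :=
    h1.clm_apply contDiff_const
  unfold Smooth2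
  convert h2 using 2 with p
  exact dS_one_fd hh p.1 p.2

theorem Smooth2.dP1 {h : ℝ → ℝ → ℝ} (hh : Smooth2 h) : Smooth2 (dPsi 1 h) := by
  have h1 : ContDiff ℝ (⊤ : ℕ∞) (fderiv ℝ (fun p : ℝ × ℝ => h p.1 p.2)) :=
    ContDiff.fderiv_right hh (by simp)
  have h2 : ContDiff ℝ (⊤ : ℕ∞)
      (fun p : ℝ × ℝ => fderiv ℝ (fun p : ℝ × ℝ => h p.1 p.2) p (0, 1)) :=
    h1.clm_apply contDiff_const
  unfold Smooth2
  convert h2 using 2 with p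
  exact dPsi_one_fd hh p.1 p.2

theorem Smooth2.dSk {h : ℝ → ℝ → ℝ} (hh : Smooth2 h) (k : ℕ) : Smooth2 (dS k h) := by
  induction k with
  | zero => rw [dS_zero]; exact hh
  | succ k ih => rw [dS_succ]; exact ih.dS1

theorem Smooth2.dPk {h : ℝ → ℝ → ℝ} (hh : Smooth2 h) (k : ℕ) : Smooth2 (dPsi k h) := by
  induction k with
  | zero => rw [dPsi_zero]; exact hh
  | succ k ih => rw [dPsi_succ]; exact ih.dP1

/-- computing derivatives from `HasDerivAt` -/
theorem dS_of_hasDerivAt {h : ℝ → ℝ → ℝ} {s ψ d : ℝ}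
    (H : HasDerivAt (fun s => h s ψ) d s) : dS 1 h s ψ = d := by
  rw [dS_one_eq]; exact H.deriv

theorem dPsi_of_hasDerivAt {h : ℝ → ℝ → ℝ} {s ψ d : ℝ}
    (H : HasDerivAt (fun t => h s t) d ψ) : dPsi 1 h s ψ = d := by
  rw [dPsi_one_eq]; exact H.deriv

theorem clm_line_deriv (g : ℝ × ℝ → (ℝ × ℝ →L[ℝ] ℝ)) (D : ℝ × ℝ →L[ℝ] (ℝ × ℝ →L[ℝ] ℝ))
    (c : ℝ → ℝ × ℝ) (t : ℝ) (v w : ℝ × ℝ) (hg : HasFDerivAt g D (c t)) (hc : HasDerivAt c v t) :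
    HasDerivAt (fun y => g (c y) w) (D v w) t := by
  have h1 : HasDerivAt (fun y => g (c y)) (D v) t := HasFDerivAt.comp_hasDerivAt t hg hc
  have h2 := h1.clm_apply (hasDerivAt_const t w)
  simpa using h2

theorem dS_dPsi_comm1 {h : ℝ → ℝ → ℝ} (hh : Smooth2 h) :
    dS 1 (dPsi 1 h) = dPsi 1 (dS 1 h) := by
  funext s ψ
  obtain ⟨f, hf⟩ : ∃ f : ℝ × ℝ → ℝ, f = fun p => h p.1 p.2 := ⟨_, rfl⟩
  have hs : ContDiff ℝ (⊤ : ℕ∞) f := by rw [hf]; exact hh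
  have hd : ContDiff ℝ (⊤ : ℕ∞) (fderiv ℝ f) := ContDiff.fderiv_right hs (by simp)
  have hd' : HasFDerivAt (fderiv ℝ f) (fderiv ℝ (fderiv ℝ f) (s, ψ)) (s, ψ) :=
    ((hd.differentiable (by simp)) (s, ψ)).hasFDerivAt
  have hsym : fderiv ℝ (fderiv ℝ f) (s, ψ) (1, 0) (0, 1)
      = fderiv ℝ (fderiv ℝ f) (s, ψ) (0, 1) (1, 0) :=
    second_derivative_symmetric (f := f) (f' := fderiv ℝ f)
      (fun y => ((hs.differentiable (by simp)) y).hasFDerivAt) hd' _ _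
  generalize fderiv ℝ (fderiv ℝ f) (s, ψ) = D at hd' hsym
  have e1 : dS 1 (dPsi 1 h) s ψ = D (1, 0) (0, 1) := by
    apply dS_of_hasDerivAt
    have h1 : HasDerivAt (fun s : ℝ => ((s, ψ) : ℝ × ℝ)) ((1, 0) : ℝ × ℝ) s :=
      (hasDerivAt_id s).prodMk (hasDerivAt_const s ψ)
    have h3 : (fun s' => dPsi 1 h s' ψ) = fun y => (fderiv ℝ f (y, ψ)) (0, 1) := by
      funext y; rw [hf]; exact dPsi_one_fd hh y ψ
    rw [h3]
    exact clm_line_deriv (fderiv ℝ f) D (fun s : ℝ => ((s, ψ) : ℝ × ℝ)) s _ _ hd' h1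
  have e2 : dPsi 1 (dS 1 h) s ψ = D (0, 1) (1, 0) := by
    apply dPsi_of_hasDerivAt
    have h1 : HasDerivAt (fun ψ : ℝ => ((s, ψ) : ℝ × ℝ)) ((0, 1) : ℝ × ℝ) ψ :=
      (hasDerivAt_const ψ s).prodMk (hasDerivAt_id ψ)
    have h3 : (fun t => dS 1 h s t) = fun y => (fderiv ℝ f (s, y)) (1, 0) := by
      funext y; rw [hf]; exact dS_one_fd hh s y
    rw [h3]
    exact clm_line_deriv (fderiv ℝ f) D (fun t : ℝ => ((s, t) : ℝ × ℝ)) ψ _ _ hd' h1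
  rw [e1, e2, hsym]

theorem dS_dPsi_comm1k {h : ℝ → ℝ → ℝ} (hh : Smooth2 h) (j : ℕ) :
    dS 1 (dPsi j h) = dPsi j (dS 1 h) := by
  induction j with
  | zero => simp only [dPsi_zero]
  | succ j ih =>
    rw [dPsi_succ, dS_dPsi_comm1 (hh.dPk j), ih, ← dPsi_succ]

theorem dS_dPsi_comm {h : ℝ → ℝ → ℝ} (hh : Smooth2 h) (k j : ℕ) :
    dS k (dPsi j h) = dPsi j (dS k h) := by
  induction k with
  | zero => simp only [dS_zero]
  | succ k ih =>
    rw [dS_succ, ih, dS_dPsi_comm1k (hh.dSk k), ← dS_succ]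

theorem PeriodicS.dS1 {L : ℝ} {h : ℝ → ℝ → ℝ} (hp : PeriodicS L h) : PeriodicS L (dS 1 h) := by
  intro ψ s
  show dS 1 h (s + L) ψ = dS 1 h s ψ
  rw [dS_one_eq, dS_one_eq, ← deriv_comp_add_const (fun s' => h s' ψ) L s]
  congr 1
  funext s'
  exact hp ψ s'

theorem PeriodicS.dSk {L : ℝ} {h : ℝ → ℝ → ℝ} (hp : PeriodicS L h) (k : ℕ) :
    PeriodicS L (dS k h) := by
  induction k with
  | zero => rw [dS_zero]; exact hp
  | succ k ih => rw [dS_succ]; exact ih.dS1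

theorem PeriodicS.dPk {L : ℝ} {h : ℝ → ℝ → ℝ} (hp : PeriodicS L h) (k : ℕ) :
    PeriodicS L (dPsi k h) := by
  intro ψ s
  show dPsi k h (s + L) ψ = dPsi k h s ψ
  simp only [dPsi]
  congr 1
  funext t
  exact hp t s

theorem Smooth2.add {h g : ℝ → ℝ → ℝ} (hh : Smooth2 h) (hg : Smooth2 g) :
    Smooth2 (fun s ψ => h s ψ + g s ψ) := ContDiff.add hh hg
theorem Smooth2.sub {h g : ℝ → ℝ → ℝ} (hh : Smooth2 h) (hg : Smooth2 g) :
    Smooth2 (fun s ψ => h s ψ - g s ψ) := ContDiff.sub hh hg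
theorem Smooth2.mul {h g : ℝ → ℝ → ℝ} (hh : Smooth2 h) (hg : Smooth2 g) :
    Smooth2 (fun s ψ => h s ψ * g s ψ) := ContDiff.mul hh hg
theorem smooth2_s {f : ℝ → ℝ} (hf : ContDiff ℝ (⊤ : ℕ∞) f) :
    Smooth2 (fun s _ => f s) := ContDiff.comp hf contDiff_fst
theorem smooth2_p {f : ℝ → ℝ} (hf : ContDiff ℝ (⊤ : ℕ∞) f) :
    Smooth2 (fun _ ψ => f ψ) := ContDiff.comp hf contDiff_snd
theorem Smooth2.wt {h : ℝ → ℝ → ℝ} (hh : Smooth2 h) (m : ℕ) : Smooth2 (wt m h) :=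
  (smooth2_p (f := fun ψ => (1 + ψ) ^ m) (by fun_prop)).mul hh

/-! ### Integrals over rectangles -/

/-- Iterated integral over `[0,L] × [0,R]`. -/
noncomputable def IR (L R : ℝ) (h : ℝ → ℝ → ℝ) : ℝ :=
  ∫ ψ in (0:ℝ)..R, ∫ s in (0:ℝ)..L, h s ψ

/-- Joint continuity. -/
def Cont2 (h : ℝ → ℝ → ℝ) : Prop := Continuous (fun p : ℝ × ℝ => h p.1 p.2)

theorem Cont2.slS {h : ℝ → ℝ → ℝ} (hh : Cont2 h) (ψ : ℝ) : Continuous (fun s => h s ψ) := by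
  have : Continuous (fun s : ℝ => ((s, ψ) : ℝ × ℝ)) := by fun_prop
  exact Continuous.comp hh this

theorem Cont2.slP {h : ℝ → ℝ → ℝ} (hh : Cont2 h) (s : ℝ) : Continuous (fun ψ => h s ψ) := by
  have : Continuous (fun ψ : ℝ => ((s, ψ) : ℝ × ℝ)) := by fun_prop
  exact Continuous.comp (g := fun p : ℝ × ℝ => h p.1 p.2) hh this

theorem Cont2.inner {h : ℝ → ℝ → ℝ} (hh : Cont2 h) (L : ℝ) :
    Continuous (fun ψ => ∫ s in (0:ℝ)..L, h s ψ) := by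
  apply intervalIntegral.continuous_parametric_intervalIntegral_of_continuous'
  have : Continuous (fun p : ℝ × ℝ => ((p.2, p.1) : ℝ × ℝ)) := by fun_prop
  exact Continuous.comp (g := fun p : ℝ × ℝ => h p.1 p.2) hh this

theorem IR_mono {L R : ℝ} (hL : 0 ≤ L) (hR : 0 ≤ R) {f g : ℝ → ℝ → ℝ} (hf : Cont2 f)
    (hg : Cont2 g) (hle : ∀ s ψ, 0 ≤ ψ → ψ ≤ R → f s ψ ≤ g s ψ) : IR L R f ≤ IR L R g := by
  apply intervalIntegral.integral_mono_on hR ((hf.inner L).intervalIntegrable _ _)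
    ((hg.inner L).intervalIntegrable _ _)
  intro ψ hψ
  apply intervalIntegral.integral_mono_on hL ((hf.slS ψ).intervalIntegrable _ _)
    ((hg.slS ψ).intervalIntegrable _ _)
  intro s _
  exact hle s ψ hψ.1 hψ.2

theorem IR_add {L R : ℝ} {f g : ℝ → ℝ → ℝ} (hf : Cont2 f)
    (hg : Cont2 g) : IR L R (fun s ψ => f s ψ + g s ψ) = IR L R f + IR L R g := by
  unfold IR
  rw [← intervalIntegral.integral_add ((hf.inner L).intervalIntegrable _ _)
    ((hg.inner L).intervalIntegrable _ _)]
  congr 1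
  funext ψ
  exact intervalIntegral.integral_add ((hf.slS ψ).intervalIntegrable _ _)
    ((hg.slS ψ).intervalIntegrable _ _)

theorem IR_mul {L R : ℝ} (c : ℝ) (f : ℝ → ℝ → ℝ) :
    IR L R (fun s ψ => c * f s ψ) = c * IR L R f := by
  unfold IR
  simp only [intervalIntegral.integral_const_mul]

theorem IR_dS {L : ℝ} (R : ℝ) {h : ℝ → ℝ → ℝ} (hh : Smooth2 h) (hp : PeriodicS L h) :
    IR L R (dS 1 h) = 0 := by
  unfold IR
  have : ∀ ψ, ∫ s in (0:ℝ)..L, dS 1 h s ψ = 0 := by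
    intro ψ
    rw [intervalIntegral.integral_eq_sub_of_hasDerivAt (fun s _ => hh.hS s ψ)
      ((Cont2.slS hh.dS1.cont ψ).intervalIntegrable _ _)]
    have := hp ψ 0
    simp only [zero_add] at this
    rw [this, sub_self]
  simp [this]

theorem hasDerivAt_inner {h : ℝ → ℝ → ℝ} (hh : Smooth2 h) (L ψ : ℝ) :
    HasDerivAt (fun ψ => ∫ s in (0:ℝ)..L, h s ψ) (∫ s in (0:ℝ)..L, dPsi 1 h s ψ) ψ := by
  have hc : Continuous (fun p : ℝ × ℝ => dPsi 1 h p.1 p.2) := hh.dP1.cont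
  obtain ⟨M, hM⟩ := ((isCompact_uIcc (a := (0:ℝ)) (b := L)).prod
    (isCompact_Icc (a := ψ - 1) (b := ψ + 1))).exists_bound_of_continuousOn hc.continuousOn
  refine (intervalIntegral.hasDerivAt_integral_of_dominated_loc_of_deriv_le
    (F := fun ψ s => h s ψ) (F' := fun ψ s => dPsi 1 h s ψ) (bound := fun _ => M)
    (s := Icc (ψ - 1) (ψ + 1)) (Icc_mem_nhds (by linarith) (by linarith)) ?_ ?_ ?_ ?_ ?_ ?_).2
  · exact Eventually.of_forall fun t => (Cont2.slS hh.cont t).aestronglyMeasurable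
  · exact (Cont2.slS hh.cont ψ).intervalIntegrable _ _
  · exact (Cont2.slS hh.dP1.cont ψ).aestronglyMeasurable
  · refine Eventually.of_forall fun s hs t ht => hM (s, t) ⟨uIoc_subset_uIcc hs, ht⟩
  · exact intervalIntegrable_const
  · exact Eventually.of_forall fun s _ t _ => hh.hP s t

theorem IR_dPsi (L : ℝ) {R : ℝ} {h : ℝ → ℝ → ℝ} (hh : Smooth2 h)
    (h0 : ∀ s, h s 0 = 0) (hR : ∀ s, h s R = 0) :
    IR L R (dPsi 1 h) = 0 := by
  unfold IR
  rw [intervalIntegral.integral_eq_sub_of_hasDerivAt (fun ψ _ => hasDerivAt_inner hh L ψ)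
      ((Cont2.inner hh.dP1.cont L).intervalIntegrable _ _)]
  simp [h0, hR]

theorem IR_integrableOn {L R : ℝ} {h : ℝ → ℝ → ℝ} (hh : Cont2 h) :
    IntegrableOn (fun p : ℝ × ℝ => h p.1 p.2) (Ioc (0:ℝ) L ×ˢ Ioc (0:ℝ) R) := by
  have : IntegrableOn (fun p : ℝ × ℝ => h p.1 p.2) (Icc (0:ℝ) L ×ˢ Icc (0:ℝ) R) :=
    (Continuous.continuousOn hh).integrableOn_compact (isCompact_Icc.prod isCompact_Icc)
  exact this.mono_set (prod_mono Ioc_subset_Icc_self Ioc_subset_Icc_self)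

theorem IR_eq {L R : ℝ} (hL : 0 ≤ L) (hR : 0 ≤ R) {h : ℝ → ℝ → ℝ} (hh : Cont2 h) :
    IR L R h = ∫ p in Ioc (0:ℝ) L ×ˢ Ioc (0:ℝ) R, h p.1 p.2 := by
  have h1 := setIntegral_prod_swap (μ := (volume : Measure ℝ)) (ν := (volume : Measure ℝ))
    (Ioc (0:ℝ) L) (Ioc (0:ℝ) R) (fun p : ℝ × ℝ => h p.1 p.2)
  have hh' : Cont2 (fun a b => h b a) := by
    have : Continuous (fun p : ℝ × ℝ => ((p.2, p.1) : ℝ × ℝ)) := by fun_prop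
    exact Continuous.comp (g := fun p : ℝ × ℝ => h p.1 p.2) hh this
  have h2 : IntegrableOn (fun z : ℝ × ℝ => h z.swap.1 z.swap.2)
      (Ioc (0:ℝ) R ×ˢ Ioc (0:ℝ) L) ((volume : Measure ℝ).prod volume) :=
    IR_integrableOn (h := fun a b => h b a) hh'
  have h3 := setIntegral_prod _ h2
  have h4 : ∫ p in Ioc (0:ℝ) L ×ˢ Ioc (0:ℝ) R, h p.1 p.2
      = ∫ x in Ioc (0:ℝ) R, ∫ y in Ioc (0:ℝ) L, h y x := by
    rw [Measure.volume_eq_prod, ← h1, h3]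
    rfl
  rw [h4]
  unfold IR
  rw [intervalIntegral.integral_of_le hR]
  congr 1
  funext ψ
  rw [intervalIntegral.integral_of_le hL]

/-- finite with squared norm at most `K` -/
def Bd (L : ℝ) (h : ℝ → ℝ → ℝ) (K : ℝ) : Prop := FiniteL2 L h ∧ L2sq L h ≤ K

theorem Cont2.sq {h : ℝ → ℝ → ℝ} (hh : Cont2 h) : Cont2 (fun s ψ => h s ψ ^ 2) :=
  Continuous.pow hh 2

theorem Bd.IR_le {L K : ℝ} (hL : 0 ≤ L) {h : ℝ → ℝ → ℝ} (hh : Cont2 h) (hb : Bd L h K) {R : ℝ}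
    (hR : 0 ≤ R) : IR L R (fun s ψ => h s ψ ^ 2) ≤ K := by
  rw [IR_eq hL hR hh.sq]
  refine le_trans ?_ hb.2
  apply setIntegral_mono_set hb.1
  · exact Eventually.of_forall fun p => sq_nonneg _
  · exact (prod_mono subset_rfl Ioc_subset_Ioi_self).eventuallyLE

theorem Bd_of_IR {L K K' : ℝ} (hL : 0 ≤ L) {h : ℝ → ℝ → ℝ} (hh : Cont2 h)
    (H : ∀ R : ℝ, 1 ≤ R → IR L R (fun s ψ => h s ψ ^ 2) ≤ K + K' / R) : Bd L h K := by
  set μ := (volume : Measure (ℝ × ℝ)).restrict (Ioc (0:ℝ) L ×ˢ Ioi (0:ℝ)) with hμ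
  set φ : ℕ → Set (ℝ × ℝ) := fun n => Ioc (0:ℝ) L ×ˢ Ioc (0:ℝ) n with hφ
  have hms : MeasurableSet (Ioc (0:ℝ) L ×ˢ Ioi (0:ℝ)) := measurableSet_Ioc.prod measurableSet_Ioi
  have hcov : AECover μ atTop φ := by
    refine ⟨?_, fun n => measurableSet_Ioc.prod measurableSet_Ioc⟩
    rw [hμ, ae_restrict_iff' hms]
    refine Eventually.of_forall fun p hp => ?_
    obtain ⟨N, hN⟩ := exists_nat_ge p.2
    filter_upwards [eventually_ge_atTop N] with n hn
    exact ⟨hp.1, hp.2, hN.trans (by exact_mod_cast hn)⟩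
  have hsub : ∀ n, φ n ⊆ Ioc (0:ℝ) L ×ˢ Ioi (0:ℝ) :=
    fun n => prod_mono subset_rfl Ioc_subset_Ioi_self
  have hres : ∀ n, μ.restrict (φ n) = volume.restrict (φ n) := by
    intro n
    rw [hμ, Measure.restrict_restrict (hcov.measurableSet n), inter_eq_left.2 (hsub n)]
  have hint : ∀ n, IntegrableOn (fun p : ℝ × ℝ => h p.1 p.2 ^ 2) (φ n) μ := by
    intro n
    rw [IntegrableOn, hres n]
    exact IR_integrableOn hh.sq
  have hval : ∀ n, ∫ p in φ n, h p.1 p.2 ^ 2 ∂μ = IR L n (fun s ψ => h s ψ ^ 2) := by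
    intro n
    rw [hres n, IR_eq hL (Nat.cast_nonneg n) hh.sq]
  have hev : ∀ᶠ n : ℕ in atTop, ∫ p in φ n, h p.1 p.2 ^ 2 ∂μ ≤ K + K' / n := by
    filter_upwards [eventually_ge_atTop 1] with n hn
    rw [hval n]
    exact H n (by exact_mod_cast hn)
  have hlim : Tendsto (fun n : ℕ => K + K' / (n:ℝ)) atTop (nhds K) := by
    have := (tendsto_const_div_atTop_nhds_zero_nat K').const_add K
    simpa using this
  have hI : Integrable (fun p : ℝ × ℝ => h p.1 p.2 ^ 2) μ := by
    apply hcov.integrable_of_integral_bounded_of_nonneg_ae (K + 1) hint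
    · exact Eventually.of_forall fun p => sq_nonneg _
    · filter_upwards [hev, hlim.eventually (eventually_lt_nhds (lt_add_one K))] with n h1 h2
      exact h1.trans h2.le
  refine ⟨hI, ?_⟩
  have ht := hcov.integral_tendsto_of_countably_generated hI
  exact le_of_tendsto_of_tendsto ht hlim hev

theorem Bd_of_IR' {L K : ℝ} (hL : 0 ≤ L) {h : ℝ → ℝ → ℝ} (hh : Cont2 h)
    (H : ∀ R : ℝ, 1 ≤ R → IR L R (fun s ψ => h s ψ ^ 2) ≤ K) : Bd L h K := by
  apply Bd_of_IR (K' := 0) hL hh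
  intro R hR
  simpa using H R hR

theorem Bd.nonneg {L K : ℝ} {h : ℝ → ℝ → ℝ} (hb : Bd L h K) : 0 ≤ K :=
  le_trans (integral_nonneg fun _ => sq_nonneg _) hb.2

theorem Bd.mono {L K K' : ℝ} {h : ℝ → ℝ → ℝ} (hb : Bd L h K) (hK : K ≤ K') : Bd L h K' :=
  ⟨hb.1, hb.2.trans hK⟩

theorem Bd.le3 {L : ℝ} {r h₁ h₂ h₃ : ℝ → ℝ → ℝ} {K₁ K₂ K₃ : ℝ} (c₁ c₂ c₃ : ℝ)
    (hc₁ : 0 ≤ c₁) (hc₂ : 0 ≤ c₂) (hc₃ : 0 ≤ c₃) (hr : Cont2 r)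
    (b₁ : Bd L h₁ K₁) (b₂ : Bd L h₂ K₂) (b₃ : Bd L h₃ K₃)
    (hle : ∀ s ψ, 0 < ψ → r s ψ ^ 2 ≤ c₁ * h₁ s ψ ^ 2 + c₂ * h₂ s ψ ^ 2 + c₃ * h₃ s ψ ^ 2) :
    Bd L r (c₁ * K₁ + c₂ * K₂ + c₃ * K₃) := by
  have hms : MeasurableSet (Ioc (0:ℝ) L ×ˢ Ioi (0:ℝ)) := measurableSet_Ioc.prod measurableSet_Ioi
  have i1 := (b₁.1.const_mul c₁)
  have i2 := (b₂.1.const_mul c₂)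
  have i3 := (b₃.1.const_mul c₃)
  have hI := (i1.add i2).add i3
  have hae : ∀ᵐ p ∂(volume.restrict (Ioc (0:ℝ) L ×ˢ Ioi (0:ℝ))), r p.1 p.2 ^ 2 ≤
      c₁ * h₁ p.1 p.2 ^ 2 + c₂ * h₂ p.1 p.2 ^ 2 + c₃ * h₃ p.1 p.2 ^ 2 := by
    rw [ae_restrict_iff' hms]
    exact Eventually.of_forall fun p hp => hle p.1 p.2 hp.2
  have hrI : FiniteL2 L r := by
    refine Integrable.mono' hI (Continuous.aestronglyMeasurable hr.sq) ?_
    filter_upwards [hae] with p hp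
    rw [Real.norm_of_nonneg (sq_nonneg _)]
    exact hp
  refine ⟨hrI, ?_⟩
  have h1 := integral_mono_ae hrI hI hae
  have h2 : ∫ p in Ioc (0:ℝ) L ×ˢ Ioi (0:ℝ), (c₁ * h₁ p.1 p.2 ^ 2 + c₂ * h₂ p.1 p.2 ^ 2
      + c₃ * h₃ p.1 p.2 ^ 2) = c₁ * L2sq L h₁ + c₂ * L2sq L h₂ + c₃ * L2sq L h₃ := by
    have e1 := integral_add (i1.add i2) i3
    have e2 := integral_add i1 i2
    simp only [Pi.add_apply] at e1 e2
    rw [e1, e2]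
    simp only [integral_const_mul]
    rfl
  have h3 : L2sq L r ≤ c₁ * L2sq L h₁ + c₂ * L2sq L h₂ + c₃ * L2sq L h₃ := by
    rw [← h2]; exact h1
  have := mul_le_mul_of_nonneg_left b₁.2 hc₁
  have := mul_le_mul_of_nonneg_left b₂.2 hc₂
  have := mul_le_mul_of_nonneg_left b₃.2 hc₃
  linarith

theorem Bd.le2 {L : ℝ} {r h₁ h₂ : ℝ → ℝ → ℝ} {K₁ K₂ : ℝ} (c₁ c₂ : ℝ)
    (hc₁ : 0 ≤ c₁) (hc₂ : 0 ≤ c₂) (hr : Cont2 r)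
    (b₁ : Bd L h₁ K₁) (b₂ : Bd L h₂ K₂)
    (hle : ∀ s ψ, 0 < ψ → r s ψ ^ 2 ≤ c₁ * h₁ s ψ ^ 2 + c₂ * h₂ s ψ ^ 2) :
    Bd L r (c₁ * K₁ + c₂ * K₂) := by
  have := Bd.le3 c₁ c₂ 0 hc₁ hc₂ le_rfl hr b₁ b₂ b₂ (fun s ψ h => by simpa using hle s ψ h)
  simpa using this

theorem Bd.le1 {L : ℝ} {r h₁ : ℝ → ℝ → ℝ} {K₁ : ℝ} (c₁ : ℝ)
    (hc₁ : 0 ≤ c₁) (hr : Cont2 r) (b₁ : Bd L h₁ K₁)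
    (hle : ∀ s ψ, 0 < ψ → r s ψ ^ 2 ≤ c₁ * h₁ s ψ ^ 2) :
    Bd L r (c₁ * K₁) := by
  have := Bd.le2 c₁ 0 hc₁ le_rfl hr b₁ b₁ (fun s ψ h => by simpa using hle s ψ h)
  simpa using this

theorem FiniteL2.bd {L : ℝ} {h : ℝ → ℝ → ℝ} (hb : FiniteL2 L h) : Bd L h (L2sq L h) :=
  ⟨hb, le_rfl⟩

theorem Cont2.const_mul' {h : ℝ → ℝ → ℝ} (hh : Cont2 h) (c : ℝ) :
    Cont2 (fun s ψ => c * h s ψ) := Continuous.mul continuous_const hh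

theorem Cont2.add' {h g : ℝ → ℝ → ℝ} (hh : Cont2 h) (hg : Cont2 g) :
    Cont2 (fun s ψ => h s ψ + g s ψ) := Continuous.add hh hg

theorem IR_nonneg {L R : ℝ} (hL : 0 ≤ L) (hR : 0 ≤ R) {h : ℝ → ℝ → ℝ}
    (h0 : ∀ s ψ, 0 ≤ h s ψ) : 0 ≤ IR L R h :=
  intervalIntegral.integral_nonneg hR fun ψ _ =>
    intervalIntegral.integral_nonneg hL fun s _ => h0 s ψ

/-! ### Cauchy–Schwarz and Poincaré -/

theorem cs_interval {a b : ℝ} (hab : a ≤ b) {u v : ℝ → ℝ}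
    (hu : IntervalIntegrable (fun x => u x ^ 2) volume a b)
    (hv : IntervalIntegrable (fun x => v x ^ 2) volume a b)
    (huv : IntervalIntegrable (fun x => u x * v x) volume a b) :
    (∫ x in a..b, u x * v x) ^ 2 ≤ (∫ x in a..b, u x ^ 2) * ∫ x in a..b, v x ^ 2 := by
  have key : ∀ t : ℝ, 0 ≤ (∫ x in a..b, u x ^ 2) * (t * t) + (2 * ∫ x in a..b, u x * v x) * t
      + ∫ x in a..b, v x ^ 2 := by
    intro t
    have h0 : 0 ≤ ∫ x in a..b, (u x * t + v x) ^ 2 :=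
      intervalIntegral.integral_nonneg hab fun x _ => sq_nonneg _
    have h1 : ∫ x in a..b, (u x * t + v x) ^ 2
        = ∫ x in a..b, ((t * t) * u x ^ 2 + (2 * t) * (u x * v x) + v x ^ 2) := by
      congr 1; funext x; ring
    rw [h1, intervalIntegral.integral_add ((hu.const_mul _).add (huv.const_mul _)) hv,
      intervalIntegral.integral_add (hu.const_mul _) (huv.const_mul _),
      intervalIntegral.integral_const_mul, intervalIntegral.integral_const_mul] at h0
    linarith
  have := discrim_le_zero key
  unfold discrim at this
  nlinarith

theorem sq_sub_le_aux {a b x y : ℝ} (hx : a ≤ x) (hxy : x ≤ y) (hy : y ≤ b) {f f' : ℝ → ℝ}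
    (hf : ∀ x, HasDerivAt f (f' x) x) (hc : Continuous f') :
    (f y - f x) ^ 2 ≤ (b - a) * ∫ t in a..b, f' t ^ 2 := by
  rw [← intervalIntegral.integral_eq_sub_of_hasDerivAt (fun t _ => hf t)
    (hc.intervalIntegrable x y)]
  have h1 := cs_interval hxy (u := fun _ => (1:ℝ)) (v := f')
    ((by fun_prop : Continuous fun _ : ℝ => (1:ℝ)^2).intervalIntegrable _ _)
    ((hc.pow 2).intervalIntegrable _ _)
    ((by fun_prop : Continuous fun x : ℝ => (1:ℝ) * f' x).intervalIntegrable _ _)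
  simp only [one_mul, one_pow, intervalIntegral.integral_const, smul_eq_mul, mul_one] at h1
  refine h1.trans ?_
  have h2 : ∫ t in x..y, f' t ^ 2 ≤ ∫ t in a..b, f' t ^ 2 := by
    apply intervalIntegral.integral_mono_interval hx hxy hy
    · exact Eventually.of_forall fun t => sq_nonneg _
    · exact (hc.pow 2).intervalIntegrable _ _
  have h3 : 0 ≤ ∫ t in x..y, f' t ^ 2 :=
    intervalIntegral.integral_nonneg hxy fun t _ => sq_nonneg _
  exact mul_le_mul (by linarith) h2 h3 (by linarith)

theorem sq_sub_le {a b x y : ℝ} (hx : x ∈ Icc a b) (hy : y ∈ Icc a b) {f f' : ℝ → ℝ}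
    (hf : ∀ x, HasDerivAt f (f' x) x) (hc : Continuous f') :
    (f y - f x) ^ 2 ≤ (b - a) * ∫ t in a..b, f' t ^ 2 := by
  rcases le_total x y with h | h
  · exact sq_sub_le_aux hx.1 h hy.2 hf hc
  · have := sq_sub_le_aux hy.1 h hx.2 hf hc
    nlinarith

theorem poincare_pt {L : ℝ} (hL : 0 < L) {ρ : ℝ → ℝ} (hρ : Continuous ρ) (hpos : ∀ s, 0 < ρ s)
    {f f' : ℝ → ℝ} (hf : ∀ x, HasDerivAt f (f' x) x) (hc : Continuous f') {s : ℝ}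
    (hs : s ∈ Icc 0 L) :
    f s ^ 2 ≤ 2 * L * (∫ t in (0:ℝ)..L, f' t ^ 2)
      + 2 / (∫ t in (0:ℝ)..L, ρ t) ^ 2 * (∫ t in (0:ℝ)..L, ρ t * f t) ^ 2 := by
  have hfc : Continuous f := continuous_iff_continuousAt.2 fun x => (hf x).continuousAt
  have hm : 0 < ∫ t in (0:ℝ)..L, ρ t :=
    intervalIntegral.intervalIntegral_pos_of_pos_on (hρ.intervalIntegrable _ _)
      (fun t _ => hpos t) hL
  set m := ∫ t in (0:ℝ)..L, ρ t
  set A := ∫ t in (0:ℝ)..L, ρ t * f t with hA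
  have hD : 0 ≤ ∫ t in (0:ℝ)..L, f' t ^ 2 :=
    intervalIntegral.integral_nonneg hL.le fun t _ => sq_nonneg _
  set D := ∫ t in (0:ℝ)..L, f' t ^ 2 with hDd
  have hJ : ∀ t ∈ Icc 0 L, |f t - f s| ≤ Real.sqrt (L * D) := by
    intro t ht
    apply Real.abs_le_sqrt
    have := sq_sub_le hs ht hf hc
    simpa using this
  set J := Real.sqrt (L * D) with hJd
  have hJ2 : J ^ 2 = L * D := Real.sq_sqrt (mul_nonneg hL.le hD)
  have hcst : ∀ c : ℝ, ∫ t in (0:ℝ)..L, ρ t * c = m * c := fun c =>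
    intervalIntegral.integral_mul_const _ _
  have h1 : A ≤ m * (f s + J) := by
    rw [← hcst]
    apply intervalIntegral.integral_mono_on hL.le ((hρ.mul hfc).intervalIntegrable _ _)
      ((hρ.mul continuous_const).intervalIntegrable _ _)
    intro t ht
    have := (abs_le.1 (hJ t ht)).2
    exact mul_le_mul_of_nonneg_left (by linarith) (hpos t).le
  have h2 : m * (f s - J) ≤ A := by
    rw [← hcst]
    apply intervalIntegral.integral_mono_on hL.le
      ((hρ.mul continuous_const).intervalIntegrable _ _) ((hρ.mul hfc).intervalIntegrable _ _)
    intro t ht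
    have := (abs_le.1 (hJ t ht)).1
    exact mul_le_mul_of_nonneg_left (by linarith) (hpos t).le
  have e : 2 / m ^ 2 * A ^ 2 = 2 * (A / m) ^ 2 := by field_simp
  have h1' : A / m ≤ f s + J := by rw [div_le_iff₀ hm]; linarith
  have h2' : f s - J ≤ A / m := by rw [le_div_iff₀ hm]; linarith
  rw [e]
  have : (f s - A / m) ^ 2 ≤ J ^ 2 := by
    apply sq_le_sq'
    · linarith
    · linarith
  nlinarith [sq_nonneg (f s - 2 * (A / m))]

theorem IR_const_s {L R : ℝ} (a : ℝ → ℝ) :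
    IR L R (fun _ ψ => a ψ) = L * ∫ ψ in (0:ℝ)..R, a ψ := by
  unfold IR
  simp

/-- Poincaré inequality in `s`. -/
theorem poincare_bd {L : ℝ} (hL : 0 < L) {ρ : ℝ → ℝ} (hρ : Continuous ρ) (hpos : ∀ s, 0 < ρ s) :
    ∃ C > (0:ℝ), ∀ (H : ℝ → ℝ → ℝ) (K : ℝ), Smooth2 H → Bd L (dS 1 H) K →
      Bd L (fun _ ψ => ∫ s in (0:ℝ)..L, ρ s * H s ψ) K → Bd L H (C * K) := by
  have hm : 0 < ∫ t in (0:ℝ)..L, ρ t :=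
    intervalIntegral.intervalIntegral_pos_of_pos_on (hρ.intervalIntegrable _ _)
      (fun t _ => hpos t) hL
  refine ⟨2 * L ^ 2 + 2 / (∫ t in (0:ℝ)..L, ρ t) ^ 2, by positivity, ?_⟩
  intro H K hH h1 h2
  have hcA : Cont2 (fun s ψ => ρ s * H s ψ) :=
    Continuous.mul (hρ.comp continuous_fst) hH.cont
  have hcA' : Cont2 (fun (_ : ℝ) ψ => ∫ s in (0:ℝ)..L, ρ s * H s ψ) :=
    (hcA.inner L).comp continuous_snd
  have hc1 : Cont2 (dS 1 H) := hH.dS1.cont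
  apply Bd_of_IR' hL.le hH.cont
  intro R hR
  have hR0 : (0:ℝ) ≤ R := by linarith
  have b1 := h1.IR_le hL.le hc1 hR0
  have b2 := h2.IR_le hL.le hcA' hR0
  have key : IR L R (fun s ψ => H s ψ ^ 2) ≤
      2 * L ^ 2 * IR L R (fun s ψ => dS 1 H s ψ ^ 2)
      + 2 / (∫ t in (0:ℝ)..L, ρ t) ^ 2
        * IR L R (fun _ ψ => (∫ s in (0:ℝ)..L, ρ s * H s ψ) ^ 2) := by
    rw [IR_const_s]
    unfold IR
    rw [← intervalIntegral.integral_const_mul, ← intervalIntegral.integral_const_mul,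
      ← intervalIntegral.integral_const_mul, ← intervalIntegral.integral_add]
    · apply intervalIntegral.integral_mono_on hR0
      · exact (Cont2.inner (Cont2.sq hH.cont) L).intervalIntegrable _ _
      · apply Continuous.intervalIntegrable
        have := Cont2.inner (Cont2.sq hc1) L
        have := hcA.inner L
        fun_prop
      · intro ψ _
        have hpt := fun s (hs : s ∈ Icc 0 L) => poincare_pt hL hρ hpos
          (f := fun s => H s ψ) (fun s => hH.hS s ψ) (hc1.slS ψ) hs
        have := intervalIntegral.integral_mono_on hL.le
          ((Cont2.slS (Cont2.sq hH.cont) ψ).intervalIntegrable _ _)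
          (intervalIntegrable_const (μ := volume)) hpt
        rw [intervalIntegral.integral_const] at this
        refine this.trans (le_of_eq ?_)
        simp only [smul_eq_mul, sub_zero]
        ring
    · apply Continuous.intervalIntegrable
      have := Cont2.inner (Cont2.sq hc1) L
      fun_prop
    · apply Continuous.intervalIntegrable
      have := hcA.inner L
      fun_prop
  have c1 : (0:ℝ) ≤ 2 * L ^ 2 := by positivity
  have c2 : (0:ℝ) ≤ 2 / (∫ t in (0:ℝ)..L, ρ t) ^ 2 := by positivity
  have := mul_le_mul_of_nonneg_left b1 c1
  have := mul_le_mul_of_nonneg_left b2 c2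
  linarith

/-! ### The core energy estimate -/

/-- quadratic growth of the truncated `L²` norm -/
def Gr (L : ℝ) (P : ℝ → ℝ → ℝ) : Prop :=
  ∃ K', ∀ R : ℝ, 1 ≤ R → IR L R (fun s ψ => P s ψ ^ 2) ≤ K' * R ^ 2

theorem core_pt {a b c e P q ω r p q0 q1 : ℝ} (hω : 0 < ω) (hq0 : 0 < q0) (h0 : q0 ≤ q)
    (h1 : q ≤ q1) (hp0 : 0 ≤ p) (hp1 : p ≤ 1) :
    (1 / (2 * q1)) * (p ^ 4 * a ^ 2) + (ω ^ 2 * q0 / 2) * (p ^ 4 * b ^ 2) ≤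
      (1 / q0) * (a - ω * q * b) ^ 2
      + (2 * ω * (p ^ 4 * (e * c + a * b) - 4 * r * p ^ 3 * a * c) + (-ω) * (2 * p ^ 4 * c * e)
        + (64 * ω ^ 2 * q1 * r ^ 2) * (p ^ 2 * (c ^ 2 + P * b) - 2 * r * p * P * c))
      + ((2 * (64 * ω ^ 2 * q1) + (64 * ω ^ 2 * q1) ^ 2 / (2 * ω ^ 2 * q0)) * r ^ 4) * P ^ 2 := by
  have hq : 0 < q := lt_of_lt_of_le hq0 h0
  have hq1 : 0 < q1 := lt_of_lt_of_le hq h1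
  obtain ⟨l, hl⟩ : ∃ l, l = 64 * ω ^ 2 * q1 := ⟨_, rfl⟩
  have hlpos : 0 < l := by rw [hl]; positivity
  rw [← hl]
  have T1 : 0 ≤ (1 / (2 * q)) * (p ^ 2 * a - 8 * ω * q * r * p * c) ^ 2 := by positivity
  have T1' : (1 / (2 * q)) * (p ^ 2 * a - 8 * ω * q * r * p * c) ^ 2
      = (1 / (2 * q)) * (p ^ 4 * a ^ 2) - 8 * ω * r * p ^ 3 * a * c
        + 32 * ω ^ 2 * q * r ^ 2 * p ^ 2 * c ^ 2 := by
    field_simp; ring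
  have T2 : 0 ≤ l / 2 * r ^ 2 * (p * c - 2 * r * P) ^ 2 := by positivity
  have T3 : 0 ≤ (ω ^ 2 * q0 / 2) * (p ^ 2 * b + l * r ^ 2 * P / (ω ^ 2 * q0)) ^ 2 := by positivity
  have T3' : (ω ^ 2 * q0 / 2) * (p ^ 2 * b + l * r ^ 2 * P / (ω ^ 2 * q0)) ^ 2
      = (ω ^ 2 * q0 / 2) * (p ^ 4 * b ^ 2) + l * r ^ 2 * p ^ 2 * P * b
        + (l ^ 2 / (2 * ω ^ 2 * q0) * r ^ 4) * P ^ 2 := by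
    field_simp; ring
  have T4 : 0 ≤ 32 * ω ^ 2 * (q1 - q) * (r ^ 2 * p ^ 2 * c ^ 2) := by
    have : 0 ≤ q1 - q := by linarith
    positivity
  have T5 : 0 ≤ ω ^ 2 * (q - q0) * (p ^ 4 * b ^ 2) := by
    have : 0 ≤ q - q0 := by linarith
    positivity
  have G1 : p ^ 4 * ((1 / q) * (a - ω * q * b) ^ 2) ≤ (1 / q0) * (a - ω * q * b) ^ 2 := by
    have e1 : p ^ 4 ≤ 1 := pow_le_one₀ hp0 hp1
    have e2 : (1 / q) ≤ 1 / q0 := one_div_le_one_div_of_le hq0 h0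
    have e3 : (1 / q) * (a - ω * q * b) ^ 2 ≤ (1 / q0) * (a - ω * q * b) ^ 2 :=
      mul_le_mul_of_nonneg_right e2 (sq_nonneg _)
    have e4 : 0 ≤ (1 / q) * (a - ω * q * b) ^ 2 := by positivity
    nlinarith
  have G2 : p ^ 4 * ((1 / q) * (a - ω * q * b) ^ 2)
      = 2 * ((1 / (2 * q)) * (p ^ 4 * a ^ 2)) - 2 * ω * p ^ 4 * a * b
        + ω ^ 2 * q * p ^ 4 * b ^ 2 := by
    field_simp
    ring
  have G3 : (1 / (2 * q1)) * (p ^ 4 * a ^ 2) ≤ (1 / (2 * q)) * (p ^ 4 * a ^ 2) := by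
    apply mul_le_mul_of_nonneg_right _ (by positivity)
    exact one_div_le_one_div_of_le (by positivity) (by linarith)
  have hl2 : l / 2 * r ^ 2 * p ^ 2 * c ^ 2 = 32 * ω ^ 2 * q1 * (r ^ 2 * p ^ 2 * c ^ 2) := by
    rw [hl]; ring
  have T2' : l / 2 * r ^ 2 * (p * c - 2 * r * P) ^ 2
      = l / 2 * r ^ 2 * p ^ 2 * c ^ 2 - 2 * (l * r ^ 3 * p * P * c)
        + 2 * (l * r ^ 4 * P ^ 2) := by ring
  have T4' : 32 * ω ^ 2 * (q1 - q) * (r ^ 2 * p ^ 2 * c ^ 2)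
      = 32 * ω ^ 2 * q1 * (r ^ 2 * p ^ 2 * c ^ 2) - 32 * ω ^ 2 * q * r ^ 2 * p ^ 2 * c ^ 2 := by ring
  have T5' : ω ^ 2 * (q - q0) * (p ^ 4 * b ^ 2)
      = ω ^ 2 * q * p ^ 4 * b ^ 2 - 2 * ((ω ^ 2 * q0 / 2) * (p ^ 4 * b ^ 2)) := by ring
  have E1 : 2 * ω * (p ^ 4 * (e * c + a * b) - 4 * r * p ^ 3 * a * c) + (-ω) * (2 * p ^ 4 * c * e)
        + (l * r ^ 2) * (p ^ 2 * (c ^ 2 + P * b) - 2 * r * p * P * c)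
      = 2 * ω * p ^ 4 * a * b - 8 * ω * r * p ^ 3 * a * c
        + 2 * (l / 2 * r ^ 2 * p ^ 2 * c ^ 2) + l * r ^ 2 * p ^ 2 * P * b
        - 2 * (l * r ^ 3 * p * P * c) := by ring
  have E2 : ((2 * l + l ^ 2 / (2 * ω ^ 2 * q0)) * r ^ 4) * P ^ 2
      = 2 * (l * r ^ 4 * P ^ 2) + (l ^ 2 / (2 * ω ^ 2 * q0) * r ^ 4) * P ^ 2 := by ring
  rw [E1, E2]
  rw [T1'] at T1
  rw [T2'] at T2
  rw [T3'] at T3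
  rw [T4'] at T4
  rw [T5'] at T5
  rw [G2] at G1
  rw [hl2] at T2 ⊢
  generalize (1 / (2 * q)) * (p ^ 4 * a ^ 2) = x1 at *
  generalize (1 / (2 * q1)) * (p ^ 4 * a ^ 2) = x2 at *
  generalize (1 / q0) * (a - ω * q * b) ^ 2 = x3 at *
  generalize (ω ^ 2 * q0 / 2) * (p ^ 4 * b ^ 2) = x4 at *
  generalize (l ^ 2 / (2 * ω ^ 2 * q0) * r ^ 4) * P ^ 2 = x5 at *
  generalize 32 * ω ^ 2 * q1 * (r ^ 2 * p ^ 2 * c ^ 2) = x6 at *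
  generalize 32 * ω ^ 2 * q * r ^ 2 * p ^ 2 * c ^ 2 = x7 at *
  generalize l * r ^ 2 * p ^ 2 * P * b = x8 at *
  generalize l * r ^ 3 * p * P * c = x9 at *
  generalize l * r ^ 4 * P ^ 2 = x10 at *
  generalize 2 * ω * p ^ 4 * a * b = x11 at *
  generalize 8 * ω * r * p ^ 3 * a * c = x12 at *
  generalize ω ^ 2 * q * p ^ 4 * b ^ 2 = x13 at *
  linarith

theorem hp_deriv (r ψ : ℝ) (n : ℕ) :
    HasDerivAt (fun ψ : ℝ => (1 - r * ψ) ^ n) (n * (1 - r * ψ) ^ (n - 1) * (-r)) ψ := by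
  have : HasDerivAt (fun ψ : ℝ => 1 - r * ψ) (-r) ψ := by
    simpa using ((hasDerivAt_id ψ).const_mul r).const_sub 1
  exact this.pow n

theorem smooth_p (r : ℝ) (n : ℕ) : Smooth2 (fun _ ψ => (1 - r * ψ) ^ n) :=
  smooth2_p (f := fun ψ => (1 - r * ψ) ^ n) (by fun_prop)

theorem dPsi_Phi1 {P : ℝ → ℝ → ℝ} (hP : Smooth2 P) (r : ℝ) (s ψ : ℝ) :
    dPsi 1 (fun s ψ => (1 - r * ψ) ^ 4 * (dS 1 P s ψ * dPsi 1 P s ψ)) s ψ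
    = (1 - r * ψ) ^ 4 * (dPsi 1 (dS 1 P) s ψ * dPsi 1 P s ψ + dS 1 P s ψ * dPsi 2 P s ψ)
      - 4 * r * (1 - r * ψ) ^ 3 * dS 1 P s ψ * dPsi 1 P s ψ := by
  apply dPsi_of_hasDerivAt
  have h1 := hp_deriv r ψ 4
  have h2 := hP.dS1.hP s ψ
  have h3 := hP.dP1.hP s ψ
  rw [← dPsi_succ] at h3
  refine HasDerivAt.congr_deriv (h1.mul (h2.mul h3)) ?_
  norm_num
  ring

theorem dS_Phi2 {P : ℝ → ℝ → ℝ} (hP : Smooth2 P) (r : ℝ) (s ψ : ℝ) :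
    dS 1 (fun s ψ => (1 - r * ψ) ^ 4 * (dPsi 1 P s ψ * dPsi 1 P s ψ)) s ψ
    = 2 * (1 - r * ψ) ^ 4 * dPsi 1 P s ψ * dPsi 1 (dS 1 P) s ψ := by
  apply dS_of_hasDerivAt
  have h2 := hP.dP1.hS s ψ
  rw [dS_dPsi_comm1 hP] at h2
  refine HasDerivAt.congr_deriv ((h2.mul h2).const_mul ((1 - r * ψ) ^ 4)) ?_
  ring

theorem dPsi_Phi3 {P : ℝ → ℝ → ℝ} (hP : Smooth2 P) (r : ℝ) (s ψ : ℝ) :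
    dPsi 1 (fun s ψ => (1 - r * ψ) ^ 2 * (P s ψ * dPsi 1 P s ψ)) s ψ
    = (1 - r * ψ) ^ 2 * (dPsi 1 P s ψ ^ 2 + P s ψ * dPsi 2 P s ψ)
      - 2 * r * (1 - r * ψ) * P s ψ * dPsi 1 P s ψ := by
  apply dPsi_of_hasDerivAt
  have h1 := hp_deriv r ψ 2
  have h2 := hP.hP s ψ
  have h3 := hP.dP1.hP s ψ
  rw [← dPsi_succ] at h3
  refine HasDerivAt.congr_deriv (h1.mul (h2.mul h3)) ?_
  norm_num
  ring

theorem IR_mono_R {L S R : ℝ} (hL : 0 ≤ L) (hS : 0 ≤ S) (hSR : S ≤ R) {h : ℝ → ℝ → ℝ}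
    (hc : Cont2 h) (h0 : ∀ s ψ, 0 ≤ h s ψ) : IR L S h ≤ IR L R h := by
  apply intervalIntegral.integral_mono_interval le_rfl hS hSR
  · exact Eventually.of_forall fun ψ => intervalIntegral.integral_nonneg hL fun s _ => h0 s ψ
  · exact (hc.inner L).intervalIntegrable _ _

theorem core_IR {L : ℝ} (hL : 0 < L) {q : ℝ → ℝ} (hq : Continuous q) {q0 q1 : ℝ}
    (hq0 : 0 < q0) (hqb : ∀ s, q0 ≤ q s ∧ q s ≤ q1) {ω : ℝ} (hω : 0 < ω) :
    ∃ C > (0:ℝ), ∀ (P : ℝ → ℝ → ℝ), Smooth2 P → PeriodicS L P → (∀ s, P s 0 = 0) →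
      ∀ R : ℝ, 1 ≤ R →
      IR L R (fun s ψ => (1 - (1 / R) * ψ) ^ 4 * dS 1 P s ψ ^ 2) +
      IR L R (fun s ψ => (1 - (1 / R) * ψ) ^ 4 * dPsi 2 P s ψ ^ 2) ≤
        C * IR L R (fun s ψ => (dS 1 P s ψ - ω * q s * dPsi 2 P s ψ) ^ 2)
        + C * (1 / R) ^ 4 * IR L R (fun s ψ => P s ψ ^ 2) := by
  have hq1 : 0 < q1 := lt_of_lt_of_le hq0 ((hqb 0).1.trans (hqb 0).2)
  obtain ⟨c1, hc1⟩ : ∃ c, c = 1 / (2 * q1) := ⟨_, rfl⟩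
  obtain ⟨c2, hc2⟩ : ∃ c, c = ω ^ 2 * q0 / 2 := ⟨_, rfl⟩
  obtain ⟨c3, hc3⟩ : ∃ c, c = (2 * (64 * ω ^ 2 * q1)
    + (64 * ω ^ 2 * q1) ^ 2 / (2 * ω ^ 2 * q0)) := ⟨_, rfl⟩
  have p1 : 0 < c1 := by rw [hc1]; positivity
  have p2 : 0 < c2 := by rw [hc2]; positivity
  have p3 : 0 < c3 := by rw [hc3]; positivity
  refine ⟨(1 / c1 + 1 / c2) * (1 / q0 + c3), by positivity, ?_⟩
  intro P hP hper hP0 R hR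
  have hR0 : (0:ℝ) < R := by linarith
  set r := 1 / R with hr
  have hrR : 1 - r * R = 0 := by rw [hr]; field_simp; ring
  have cp4 : Cont2 (fun _ ψ => (1 - r * ψ) ^ 4) := (smooth_p r 4).cont
  have cS : Cont2 (dS 1 P) := hP.dS1.cont
  have cPP : Cont2 (dPsi 2 P) := (hP.dPk 2).cont
  have cA : Cont2 (fun s ψ => (1 - r * ψ) ^ 4 * dS 1 P s ψ ^ 2) := Continuous.mul cp4 cS.sq
  have cB : Cont2 (fun s ψ => (1 - r * ψ) ^ 4 * dPsi 2 P s ψ ^ 2) := Continuous.mul cp4 cPP.sq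
  have cq : Cont2 (fun s _ => ω * q s) := continuous_const.mul (hq.comp continuous_fst)
  have cG0 : Cont2 (fun s ψ => dS 1 P s ψ - ω * q s * dPsi 2 P s ψ) :=
    Continuous.sub cS (Continuous.mul cq cPP)
  have s1 : Smooth2 (fun s ψ => (1 - r * ψ) ^ 4 * (dS 1 P s ψ * dPsi 1 P s ψ)) :=
    (smooth_p r 4).mul (hP.dS1.mul hP.dP1)
  have s2 : Smooth2 (fun s ψ => (1 - r * ψ) ^ 4 * (dPsi 1 P s ψ * dPsi 1 P s ψ)) :=
    (smooth_p r 4).mul (hP.dP1.mul hP.dP1)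
  have s3 : Smooth2 (fun s ψ => (1 - r * ψ) ^ 2 * (P s ψ * dPsi 1 P s ψ)) :=
    (smooth_p r 2).mul (hP.mul hP.dP1)
  have hS0 : ∀ s, dS 1 P s 0 = 0 := by
    intro s
    rw [dS_one_eq]
    simp [hP0]
  have z1 := IR_dPsi L (R := R) s1 (by simp [hS0]) (by simp [hrR])
  have z2 := IR_dS R s2 (L := L) (by
    intro ψ s
    have := hper.dPk 1 ψ s
    simp only at this ⊢
    rw [this])
  have z3 := IR_dPsi L (R := R) s3 (by simp [hP0]) (by simp [hrR])
  have d1 : Cont2 _ := s1.dP1.cont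
  have d2 : Cont2 _ := s2.dS1.cont
  have d3 : Cont2 _ := s3.dP1.cont
  have hmain := IR_mono hL.le hR0.le
    (f := fun s ψ => c1 * ((1 - r * ψ) ^ 4 * dS 1 P s ψ ^ 2)
      + c2 * ((1 - r * ψ) ^ 4 * dPsi 2 P s ψ ^ 2))
    (g := fun s ψ => (1 / q0) * (dS 1 P s ψ - ω * q s * dPsi 2 P s ψ) ^ 2
      + (2 * ω * dPsi 1 (fun s ψ => (1 - r * ψ) ^ 4 * (dS 1 P s ψ * dPsi 1 P s ψ)) s ψ
        + (-ω) * dS 1 (fun s ψ => (1 - r * ψ) ^ 4 * (dPsi 1 P s ψ * dPsi 1 P s ψ)) s ψ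
        + (64 * ω ^ 2 * q1 * r ^ 2) *
          dPsi 1 (fun s ψ => (1 - r * ψ) ^ 2 * (P s ψ * dPsi 1 P s ψ)) s ψ)
      + (c3 * r ^ 4) * P s ψ ^ 2)
    ((cA.const_mul' c1).add' (cB.const_mul' c2))
    (((cG0.sq.const_mul' _).add' (((d1.const_mul' _).add' (d2.const_mul' _)).add'
      (d3.const_mul' _))).add' ((Cont2.sq hP.cont).const_mul' _))
    (by
      intro s ψ h0 h1
      rw [dPsi_Phi1 hP, dS_Phi2 hP, dPsi_Phi3 hP, hc1, hc2, hc3]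
      apply core_pt hω hq0 (hqb s).1 (hqb s).2
      · have : r * ψ ≤ r * R := mul_le_mul_of_nonneg_left h1 (by positivity)
        linarith
      · have : 0 ≤ r * ψ := by positivity
        linarith)
  rw [IR_add (cA.const_mul' c1) (cB.const_mul' c2),
    IR_add ((cG0.sq.const_mul' _).add' (((d1.const_mul' _).add' (d2.const_mul' _)).add'
      (d3.const_mul' _))) ((Cont2.sq hP.cont).const_mul' _),
    IR_add (cG0.sq.const_mul' _) (((d1.const_mul' _).add' (d2.const_mul' _)).add'
      (d3.const_mul' _)),
    IR_add ((d1.const_mul' _).add' (d2.const_mul' _)) (d3.const_mul' _),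
    IR_add (d1.const_mul' _) (d2.const_mul' _)] at hmain
  simp only [IR_mul] at hmain
  rw [z1, z2, z3] at hmain
  have nA : 0 ≤ IR L R (fun s ψ => (1 - r * ψ) ^ 4 * dS 1 P s ψ ^ 2) := by
    apply IR_nonneg hL.le hR0.le
    intro s ψ; positivity
  have nB : 0 ≤ IR L R (fun s ψ => (1 - r * ψ) ^ 4 * dPsi 2 P s ψ ^ 2) := by
    apply IR_nonneg hL.le hR0.le
    intro s ψ; positivity
  have nG : 0 ≤ IR L R (fun s ψ => (dS 1 P s ψ - ω * q s * dPsi 2 P s ψ) ^ 2) := by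
    apply IR_nonneg hL.le hR0.le
    intro s ψ; positivity
  have nP : 0 ≤ IR L R (fun s ψ => P s ψ ^ 2) := by
    apply IR_nonneg hL.le hR0.le
    intro s ψ; positivity
  generalize IR L R (fun s ψ => (1 - r * ψ) ^ 4 * dS 1 P s ψ ^ 2) = X at *
  generalize IR L R (fun s ψ => (1 - r * ψ) ^ 4 * dPsi 2 P s ψ ^ 2) = Y at *
  generalize IR L R (fun s ψ => (dS 1 P s ψ - ω * q s * dPsi 2 P s ψ) ^ 2) = Z at *
  generalize IR L R (fun s ψ => P s ψ ^ 2) = W at *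
  have hm2 : c1 * X + c2 * Y ≤ (1 / q0) * Z + c3 * (r ^ 4 * W) := by linarith
  have nW : 0 ≤ r ^ 4 * W := by positivity
  have hm3 : (1 / q0) * Z + c3 * (r ^ 4 * W) ≤ (1 / q0 + c3) * (Z + r ^ 4 * W) := by
    have : 0 ≤ (1 / q0) * (r ^ 4 * W) := by positivity
    have : 0 ≤ c3 * Z := by positivity
    nlinarith
  have hX : X ≤ 1 / c1 * (c1 * X + c2 * Y) := by
    have : 1 / c1 * (c1 * X + c2 * Y) = X + 1 / c1 * (c2 * Y) := by field_simp
    rw [this]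
    have : 0 ≤ 1 / c1 * (c2 * Y) := by positivity
    linarith
  have hY : Y ≤ 1 / c2 * (c1 * X + c2 * Y) := by
    have : 1 / c2 * (c1 * X + c2 * Y) = 1 / c2 * (c1 * X) + Y := by field_simp
    rw [this]
    have : 0 ≤ 1 / c2 * (c1 * X) := by positivity
    linarith
  calc X + Y ≤ (1 / c1 + 1 / c2) * (c1 * X + c2 * Y) := by linarith
    _ ≤ (1 / c1 + 1 / c2) * ((1 / q0 + c3) * (Z + r ^ 4 * W)) :=
        mul_le_mul_of_nonneg_left (hm2.trans hm3) (by positivity)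
    _ = _ := by ring

theorem exists_bounds {L : ℝ} (hL : 0 < L) {q : ℝ → ℝ} (hq : Continuous q) (hper : Periodic q L)
    (hpos : ∀ s, 0 < q s) : ∃ q0 q1, 0 < q0 ∧ ∀ s, q0 ≤ q s ∧ q s ≤ q1 := by
  have hne : (Icc (0:ℝ) L).Nonempty := ⟨0, by simp [hL.le]⟩
  obtain ⟨x, hx, hmin⟩ := isCompact_Icc.exists_isMinOn hne hq.continuousOn
  obtain ⟨y, hy, hmax⟩ := isCompact_Icc.exists_isMaxOn hne hq.continuousOn
  refine ⟨q x, q y, hpos x, fun s => ?_⟩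
  obtain ⟨t, ht, hs⟩ := hper.exists_mem_Ico₀ hL s
  have : t ∈ Icc (0:ℝ) L := ⟨ht.1, ht.2.le⟩
  rw [hs]
  exact ⟨hmin this, hmax this⟩

theorem core_bd1 {L : ℝ} (hL : 0 < L) {q : ℝ → ℝ} (hq : Continuous q) {q0 q1 : ℝ}
    (hq0 : 0 < q0) (hqb : ∀ s, q0 ≤ q s ∧ q s ≤ q1) {ω : ℝ} (hω : 0 < ω) :
    ∃ C > (0:ℝ), ∀ (P : ℝ → ℝ → ℝ) (K : ℝ), Smooth2 P → PeriodicS L P → (∀ s, P s 0 = 0) →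
      Gr L P → Bd L (fun s ψ => dS 1 P s ψ - ω * q s * dPsi 2 P s ψ) K →
      Bd L (dS 1 P) (C * K) ∧ Bd L (dPsi 2 P) (C * K) := by
  obtain ⟨C, hC, H⟩ := core_IR hL hq hq0 hqb hω
  refine ⟨16 * C, by positivity, ?_⟩
  intro P K hP hper hP0 ⟨K', hK'⟩ hb
  have cS : Cont2 (dS 1 P) := hP.dS1.cont
  have cPP : Cont2 (dPsi 2 P) := (hP.dPk 2).cont
  have cq : Cont2 (fun s _ => ω * q s) := continuous_const.mul (hq.comp continuous_fst)
  have cG0 : Cont2 (fun s ψ => dS 1 P s ψ - ω * q s * dPsi 2 P s ψ) :=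
    Continuous.sub cS (Continuous.mul cq cPP)
  have hR : ∀ S : ℝ, 1 ≤ S →
      IR L (2 * S) (fun s ψ => (1 - (1 / (2 * S)) * ψ) ^ 4 * dS 1 P s ψ ^ 2) +
      IR L (2 * S) (fun s ψ => (1 - (1 / (2 * S)) * ψ) ^ 4 * dPsi 2 P s ψ ^ 2) ≤
      C * K + C * |K'| / S := by
    intro S hS
    have h1 := H P hP hper hP0 (2 * S) (by linarith)
    have h2 := hb.IR_le hL.le cG0 (R := 2 * S) (by linarith)
    have h3 := hK' (2 * S) (by linarith)
    have h4 : C * (1 / (2 * S)) ^ 4 * IR L (2 * S) (fun s ψ => P s ψ ^ 2) ≤ C * |K'| / S := by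
      have hS0 : 0 < S := by linarith
      calc C * (1 / (2 * S)) ^ 4 * IR L (2 * S) (fun s ψ => P s ψ ^ 2)
          ≤ C * (1 / (2 * S)) ^ 4 * (|K'| * (2 * S) ^ 2) := by
            apply mul_le_mul_of_nonneg_left _ (by positivity)
            exact h3.trans (mul_le_mul_of_nonneg_right (le_abs_self _) (by positivity))
        _ = C * |K'| / (4 * S ^ 2) := by field_simp; ring
        _ ≤ C * |K'| / S := by
            apply div_le_div_of_nonneg_left (by positivity) hS0
            nlinarith
    have h5 := mul_le_mul_of_nonneg_left h2 hC.le
    linarith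
  have main : ∀ h : ℝ → ℝ → ℝ, Cont2 h → ∀ S : ℝ, 1 ≤ S → IR L S (fun s ψ => h s ψ ^ 2) ≤
      16 * IR L (2 * S) (fun s ψ => (1 - (1 / (2 * S)) * ψ) ^ 4 * h s ψ ^ 2) := by
    intro h hh S hS
    have hS0 : 0 < S := by linarith
    have cp4 : Cont2 (fun _ ψ => (1 - (1 / (2 * S)) * ψ) ^ 4) := (smooth_p _ 4).cont
    have cc : Cont2 (fun s ψ => (1 - (1 / (2 * S)) * ψ) ^ 4 * h s ψ ^ 2) :=
      Continuous.mul cp4 hh.sq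
    rw [← IR_mul]
    refine le_trans (IR_mono hL.le hS0.le hh.sq (cc.const_mul' 16) ?_)
      (IR_mono_R hL.le hS0.le (by linarith) (cc.const_mul' 16) ?_)
    · intro s ψ h0 h1
      have : 1 / 2 ≤ 1 - (1 / (2 * S)) * ψ := by
        have : (1 / (2 * S)) * ψ ≤ (1 / (2 * S)) * S :=
          mul_le_mul_of_nonneg_left h1 (by positivity)
        have e : (1 / (2 * S)) * S = 1 / 2 := by field_simp
        linarith
      have h4 : (1 / 2 : ℝ) ^ 4 ≤ (1 - (1 / (2 * S)) * ψ) ^ 4 :=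
        pow_le_pow_left₀ (by norm_num) this 4
      nlinarith [sq_nonneg (h s ψ)]
    · intro s ψ; positivity
  have nn : ∀ h : ℝ → ℝ → ℝ, ∀ S : ℝ, 1 ≤ S →
      0 ≤ IR L (2 * S) (fun s ψ => (1 - (1 / (2 * S)) * ψ) ^ 4 * h s ψ ^ 2) := by
    intro h S hS
    apply IR_nonneg hL.le (by linarith)
    intro s ψ; positivity
  constructor
  · apply Bd_of_IR (K' := 16 * (C * |K'|)) hL.le cS
    intro S hS
    have := hR S hS
    have := main _ cS S hS
    have := nn (dPsi 2 P) S hS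
    have e : 16 * (C * |K'|) / S = 16 * (C * |K'| / S) := by ring
    linarith
  · apply Bd_of_IR (K' := 16 * (C * |K'|)) hL.le cPP
    intro S hS
    have := hR S hS
    have := main _ cPP S hS
    have := nn (dS 1 P) S hS
    have e : 16 * (C * |K'|) / S = 16 * (C * |K'| / S) := by ring
    linarith

theorem interp_bd {L : ℝ} (hL : 0 < L) (P : ℝ → ℝ → ℝ) (K : ℝ) (hP : Smooth2 P)
    (hP0 : ∀ s, P s 0 = 0) (b0 : Bd L P K) (b2 : Bd L (dPsi 2 P) K) :
    Bd L (dPsi 1 P) (24 * K) := by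
  have c1 : Cont2 (dPsi 1 P) := hP.dP1.cont
  have c2 : Cont2 (dPsi 2 P) := (hP.dPk 2).cont
  have c0 : Cont2 P := hP.cont
  apply Bd_of_IR' hL.le c1
  intro S hS
  have hS0 : 0 < S := by linarith
  have hrR : 1 - 1 / (2 * S) * (2 * S) = 0 := by field_simp; ring
  have hr1 : 1 / (2 * S) ≤ 1 := by rw [div_le_one (by linarith)]; linarith
  have hr0 : 0 < 1 / (2 * S) := by positivity
  obtain ⟨r, hr⟩ : ∃ r, r = 1 / (2 * S) := ⟨_, rfl⟩
  rw [← hr] at hrR hr1 hr0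
  have s3 : Smooth2 (fun s ψ => (1 - r * ψ) ^ 2 * (P s ψ * dPsi 1 P s ψ)) :=
    (smooth_p r 2).mul (hP.mul hP.dP1)
  have d3 : Cont2 _ := s3.dP1.cont
  have z3 := IR_dPsi L (R := 2 * S) s3 (by simp [hP0]) (by simp [hrR])
  have cc : Cont2 (fun s ψ => (1 - r * ψ) ^ 2 * dPsi 1 P s ψ ^ 2) :=
    Continuous.mul (smooth_p r 2).cont c1.sq
  have i1 := b0.IR_le hL.le c0 (R := 2 * S) (by linarith)
  have i2 := b2.IR_le hL.le c2 (R := 2 * S) (by linarith)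
  have m1 : IR L S (fun s ψ => dPsi 1 P s ψ ^ 2) ≤
      IR L (2 * S) (fun s ψ => 4 * ((1 - r * ψ) ^ 2 * dPsi 1 P s ψ ^ 2)) := by
    refine le_trans (IR_mono hL.le hS0.le c1.sq (cc.const_mul' 4) ?_)
      (IR_mono_R hL.le hS0.le (by linarith) (cc.const_mul' 4) ?_)
    · intro s ψ h0 h1
      have : 1 / 2 ≤ 1 - r * ψ := by
        have : r * ψ ≤ r * S :=
          mul_le_mul_of_nonneg_left h1 (by positivity)
        linarith
      have h4 : (1 / 2 : ℝ) ^ 2 ≤ (1 - r * ψ) ^ 2 :=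
        pow_le_pow_left₀ (by norm_num) this 2
      nlinarith [sq_nonneg (dPsi 1 P s ψ)]
    · intro s ψ; positivity
  have m2 : IR L (2 * S) (fun s ψ => 4 * ((1 - r * ψ) ^ 2 * dPsi 1 P s ψ ^ 2)) ≤
      IR L (2 * S) (fun s ψ => 8 * dPsi 1 (fun s ψ => (1 - r * ψ) ^ 2 * (P s ψ * dPsi 1 P s ψ)) s ψ
        + 20 * P s ψ ^ 2 + 4 * dPsi 2 P s ψ ^ 2) := by
    apply IR_mono hL.le (by linarith) (cc.const_mul' 4)
      (((d3.const_mul' 8).add' (c0.sq.const_mul' 20)).add' (c2.sq.const_mul' 4))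
    intro s ψ h0 h1
    rw [dPsi_Phi3 hP]
    have hp0 : 0 ≤ 1 - r * ψ := by
      have : r * ψ ≤ r * (2 * S) := mul_le_mul_of_nonneg_left h1 (by positivity)
      linarith
    have hp1 : 1 - r * ψ ≤ 1 := by
      have : 0 ≤ r * ψ := by positivity
      linarith
    generalize 1 - r * ψ = p at *
    generalize P s ψ = x at *
    generalize dPsi 1 P s ψ = c at *
    generalize dPsi 2 P s ψ = b at *
    have e1 : 2 * r * p * x * c ≤ 1 / 2 * p ^ 2 * c ^ 2 + 2 * x ^ 2 := by
      have h1 : 0 ≤ (p * c - 2 * r * x) ^ 2 := sq_nonneg _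
      have h2 : r ^ 2 * x ^ 2 ≤ x ^ 2 := by
        have : r ^ 2 ≤ 1 := pow_le_one₀ hr0.le hr1
        nlinarith [sq_nonneg x]
      nlinarith
    have e2 : -(p ^ 2 * (x * b)) ≤ 1 / 2 * x ^ 2 + 1 / 2 * b ^ 2 := by
      have h1 : p ^ 2 ≤ 1 := pow_le_one₀ hp0 hp1
      have h3 : 0 ≤ p ^ 2 := sq_nonneg p
      have h2 : -(x * b) ≤ 1 / 2 * x ^ 2 + 1 / 2 * b ^ 2 := by nlinarith [sq_nonneg (x + b)]
      have h4 : 0 ≤ 1 / 2 * x ^ 2 + 1 / 2 * b ^ 2 := by positivity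
      calc -(p ^ 2 * (x * b)) = p ^ 2 * (-(x * b)) := by ring
        _ ≤ p ^ 2 * (1 / 2 * x ^ 2 + 1 / 2 * b ^ 2) := mul_le_mul_of_nonneg_left h2 h3
        _ ≤ 1 * (1 / 2 * x ^ 2 + 1 / 2 * b ^ 2) := mul_le_mul_of_nonneg_right h1 h4
        _ = _ := by ring
    linarith
  rw [IR_add ((d3.const_mul' 8).add' (c0.sq.const_mul' 20)) (c2.sq.const_mul' 4),
    IR_add (d3.const_mul' 8) (c0.sq.const_mul' 20), IR_mul, IR_mul, IR_mul, IR_mul, z3] at m2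
  rw [IR_mul] at m1
  linarith

theorem core_bd {L : ℝ} (hL : 0 < L) {q : ℝ → ℝ} (hq : Continuous q) {q0 q1 : ℝ}
    (hq0 : 0 < q0) (hqb : ∀ s, q0 ≤ q s ∧ q s ≤ q1) {ω : ℝ} (hω : 0 < ω)
    {ρ : ℝ → ℝ} (hρ : Continuous ρ) (hpos : ∀ s, 0 < ρ s) :
    ∃ C > (0:ℝ), ∀ (P : ℝ → ℝ → ℝ) (K : ℝ), Smooth2 P → PeriodicS L P → (∀ s, P s 0 = 0) →
      Gr L P → Bd L (fun s ψ => dS 1 P s ψ - ω * q s * dPsi 2 P s ψ) K →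
      Bd L (fun _ ψ => ∫ s in (0:ℝ)..L, ρ s * P s ψ) K →
      Bd L P (C * K) ∧ Bd L (dS 1 P) (C * K) ∧ Bd L (dPsi 1 P) (C * K) ∧
        Bd L (dPsi 2 P) (C * K) := by
  obtain ⟨C1, hC1, H1⟩ := core_bd1 hL hq hq0 hqb hω
  obtain ⟨C2, hC2, H2⟩ := poincare_bd hL hρ hpos
  refine ⟨24 * (1 + C1) * (1 + C2), by positivity, ?_⟩
  intro P K hP hper hP0 hG hf hA
  have hK := hf.nonneg
  obtain ⟨a1, a2⟩ := H1 P K hP hper hP0 hG hf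
  have a0 := H2 P ((1 + C1) * K) hP (a1.mono (by nlinarith))
    (hA.mono (by nlinarith [mul_nonneg hC1.le hK]))
  have p1 := mul_nonneg hC1.le hK
  have p2 := mul_nonneg hC2.le hK
  have p3 := mul_nonneg hC1.le p2
  have a3 := interp_bd hL P ((1 + C1) * (1 + C2) * K) hP hP0
    (a0.mono (by nlinarith)) (a2.mono (by nlinarith))
  exact ⟨a0.mono (by nlinarith), a1.mono (by nlinarith), a3.mono (by nlinarith),
    a2.mono (by nlinarith)⟩

theorem Cont2.wt {h : ℝ → ℝ → ℝ} (hh : Cont2 h) (m : ℕ) : Cont2 (wt m h) := by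
  have : Continuous (fun p : ℝ × ℝ => (1 + p.2) ^ m) := by fun_prop
  exact this.mul hh

theorem wt_sq_le {m n : ℕ} (hmn : m ≤ n) (h : ℝ → ℝ → ℝ) (s ψ : ℝ) (hψ : 0 < ψ) :
    wt m h s ψ ^ 2 ≤ 1 * wt n h s ψ ^ 2 := by
  unfold wt
  have h1 : (1 + ψ) ^ m ≤ (1 + ψ) ^ n := pow_le_pow_right₀ (by linarith) hmn
  have h0 : 0 ≤ (1 + ψ) ^ m := by positivity
  have h2 : ((1 + ψ) ^ m) ^ 2 ≤ ((1 + ψ) ^ n) ^ 2 := pow_le_pow_left₀ h0 h1 2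
  rw [mul_pow, mul_pow, one_mul]
  exact mul_le_mul_of_nonneg_right h2 (sq_nonneg _)

theorem Bd.wt_mono {L K : ℝ} {m n : ℕ} (hmn : m ≤ n) {h : ℝ → ℝ → ℝ} (hh : Cont2 h)
    (hb : Bd L (wt n h) K) : Bd L (wt m h) K := by
  have := Bd.le1 1 zero_le_one (hh.wt m) hb (wt_sq_le hmn h)
  rwa [one_mul] at this

theorem wt_zero (h : ℝ → ℝ → ℝ) : wt 0 h = h := by
  funext s ψ; simp [wt]

theorem dS_wt {h : ℝ → ℝ → ℝ} (hh : Smooth2 h) (m : ℕ) : dS 1 (wt m h) = wt m (dS 1 h) := by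
  funext s ψ
  apply dS_of_hasDerivAt
  exact (hh.hS s ψ).const_mul _

theorem dPsi_wt {h : ℝ → ℝ → ℝ} (hh : Smooth2 h) (m : ℕ) :
    dPsi 1 (wt m h) = fun s ψ => wt m (dPsi 1 h) s ψ + m * wt (m - 1) h s ψ := by
  funext s ψ
  apply dPsi_of_hasDerivAt
  have h1 : HasDerivAt (fun ψ : ℝ => (1 + ψ) ^ m) (m * (1 + ψ) ^ (m - 1) * 1) ψ := by
    have : HasDerivAt (fun ψ : ℝ => 1 + ψ) 1 ψ := by
      simpa using (hasDerivAt_id ψ).const_add 1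
    exact this.pow m
  refine HasDerivAt.congr_deriv (h1.mul (hh.hP s ψ)) ?_
  unfold wt
  ring

theorem dPsi_add {h g : ℝ → ℝ → ℝ} (hh : Smooth2 h) (hg : Smooth2 g) (c : ℝ) :
    dPsi 1 (fun s ψ => h s ψ + c * g s ψ) = fun s ψ => dPsi 1 h s ψ + c * dPsi 1 g s ψ := by
  funext s ψ
  apply dPsi_of_hasDerivAt
  exact (hh.hP s ψ).add ((hg.hP s ψ).const_mul c)

theorem dPsi2_wt {h : ℝ → ℝ → ℝ} (hh : Smooth2 h) (m : ℕ) :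
    dPsi 2 (wt (m+1) h) = fun s ψ => wt (m+1) (dPsi 2 h) s ψ
      + 2 * (m + 1) * wt m (dPsi 1 h) s ψ + (m + 1) * m * wt (m - 1) h s ψ := by
  rw [dPsi_succ 1, dPsi_wt hh, dPsi_add (hh.dP1.wt _) (hh.wt _)]
  simp only [dPsi_wt hh.dP1, Nat.add_sub_cancel, dPsi_wt hh, ← dPsi_succ]
  funext s ψ
  push_cast
  ring

set_option maxHeartbeats 1000000 in
theorem level0 {L : ℝ} (hL : 0 < L) {q : ℝ → ℝ} (hq : Continuous q) {q0 q1 : ℝ}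
    (hq0 : 0 < q0) (hqb : ∀ s, q0 ≤ q s ∧ q s ≤ q1) {ω : ℝ} (hω : 0 < ω)
    {ρ : ℝ → ℝ} (hρ : Continuous ρ) (hpos : ∀ s, 0 < ρ s) (m : ℕ) :
    ∃ C > (0:ℝ), ∀ (P : ℝ → ℝ → ℝ) (K : ℝ), Smooth2 P → PeriodicS L P → (∀ s, P s 0 = 0) →
      Gr L P → Bd L (wt m (fun s ψ => dS 1 P s ψ - ω * q s * dPsi 2 P s ψ)) K →
      Bd L (wt m (fun _ ψ => ∫ s in (0:ℝ)..L, ρ s * P s ψ)) K →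
      Bd L (wt m P) (C * K) ∧ Bd L (wt m (dS 1 P)) (C * K) ∧ Bd L (wt m (dPsi 1 P)) (C * K) ∧
        Bd L (wt m (dPsi 2 P)) (C * K) := by
  obtain ⟨D, hD, HD⟩ := core_bd hL hq hq0 hqb hω hρ hpos
  induction m with
  | zero =>
    refine ⟨D, hD, ?_⟩
    simp only [wt_zero]
    exact HD
  | succ m ih =>
    obtain ⟨c, hc, IH⟩ := ih
    have hq1 : 0 < q1 := lt_of_lt_of_le hq0 ((hqb 0).1.trans (hqb 0).2)
    obtain ⟨A, hA⟩ : ∃ A : ℝ, A = (ω * q1 * ((m + 1) * m)) ^ 2 := ⟨_, rfl⟩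
    obtain ⟨B, hB⟩ : ∃ A : ℝ, A = (ω * q1 * (2 * (m + 1))) ^ 2 := ⟨_, rfl⟩
    obtain ⟨E, hE⟩ : ∃ A : ℝ, A = ((m + 1) : ℝ) ^ 2 := ⟨_, rfl⟩
    obtain ⟨M, hM⟩ : ∃ A : ℝ, A = (((m + 1) * m) : ℝ) ^ 2 := ⟨_, rfl⟩
    have pA : 0 ≤ A := by rw [hA]; positivity
    have pB : 0 ≤ B := by rw [hB]; positivity
    have pE : 0 ≤ E := by rw [hE]; positivity
    have pM : 0 ≤ M := by rw [hM]; positivity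
    obtain ⟨Z, hZ⟩ : ∃ Z : ℝ, Z = 3 + 3 * A * c + 3 * B * c := ⟨_, rfl⟩
    have pZ : 3 ≤ Z := by
      have : 0 ≤ 3 * A * c := by positivity
      have : 0 ≤ 3 * B * c := by positivity
      linarith
    refine ⟨3 * (D * Z) + 12 * E * c + 3 * M * c + c, by positivity, ?_⟩
    intro P K hP hper hP0 hG hf hAv
    have hK := hf.nonneg
    have cS : Cont2 (dS 1 P) := hP.dS1.cont
    have c1 : Cont2 (dPsi 1 P) := hP.dP1.cont
    have cPP : Cont2 (dPsi 2 P) := (hP.dPk 2).cont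
    have cq : Cont2 (fun s _ => ω * q s) := continuous_const.mul (hq.comp continuous_fst)
    have cG0 : Cont2 (fun s ψ => dS 1 P s ψ - ω * q s * dPsi 2 P s ψ) :=
      Continuous.sub cS (Continuous.mul cq cPP)
    have cρP : Cont2 (fun s ψ => ρ s * P s ψ) :=
      Continuous.mul (hρ.comp continuous_fst) hP.cont
    have cAv : Cont2 (fun _ ψ => ∫ s in (0:ℝ)..L, ρ s * P s ψ) :=
      (cρP.inner L).comp continuous_snd
    obtain ⟨i0, -, i1, -⟩ := IH P K hP hper hP0 hG (hf.wt_mono (Nat.le_succ m) cG0)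
      (hAv.wt_mono (Nat.le_succ m) cAv)
    -- the weighted function
    have sP := hP.wt (m+1)
    have e1 := dS_wt hP (m+1)
    have e2 := dPsi_wt hP (m+1)
    have e3 := dPsi2_wt hP m
    have hGr : Gr L (wt (m+1) P) := by
      refine ⟨4 * (c * K), fun R hR => ?_⟩
      have hR0 : 0 ≤ R := by linarith
      have := i0.IR_le hL.le (Cont2.wt hP.cont m) hR0
      refine le_trans (IR_mono hL.le hR0 (g := fun s ψ => (4 * R ^ 2) * (wt m P s ψ) ^ 2)
        (Cont2.sq sP.cont) ((Cont2.sq (Cont2.wt hP.cont m)).const_mul' _) ?_) ?_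
      · intro s ψ h0 h1
        have e : wt (m+1) P s ψ = (1 + ψ) * wt m P s ψ := by unfold wt; ring
        rw [e, mul_pow]
        apply mul_le_mul_of_nonneg_right _ (sq_nonneg _)
        nlinarith
      · rw [IR_mul]
        have : 4 * R ^ 2 * IR L R (fun s ψ => wt m P s ψ ^ 2) ≤ 4 * R ^ 2 * (c * K) :=
          mul_le_mul_of_nonneg_left this (by positivity)
        linarith
    have hf' : Bd L (fun s ψ => dS 1 (wt (m+1) P) s ψ - ω * q s * dPsi 2 (wt (m+1) P) s ψ)
        (Z * K) := by
      have cont : Cont2 (fun s ψ => dS 1 (wt (m+1) P) s ψ - ω * q s * dPsi 2 (wt (m+1) P) s ψ) :=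
        Continuous.sub sP.dS1.cont (Continuous.mul cq (sP.dPk 2).cont)
      refine (Bd.le3 3 (3 * A) (3 * B) (by norm_num) (by positivity) (by positivity) cont hf i0 i1
        ?_).mono (le_of_eq (by rw [hZ]; ring))
      intro s ψ hψ
      have w1 := wt_sq_le (Nat.sub_le m 1) P s ψ hψ
      rw [e1, e3]
      have hx : wt (m+1) (fun s ψ => dS 1 P s ψ - ω * q s * dPsi 2 P s ψ) s ψ
        = wt (m+1) (dS 1 P) s ψ - ω * q s * wt (m+1) (dPsi 2 P) s ψ := by
        unfold wt; ring
      rw [hx]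
      have hqs : (ω * q s) ^ 2 ≤ (ω * q1) ^ 2 := by
        apply pow_le_pow_left₀
        · have := hq0.trans_le (hqb s).1
          positivity
        · exact mul_le_mul_of_nonneg_left (hqb s).2 hω.le
      have hu : (ω * q s * ((m + 1) * m * wt (m - 1) P s ψ)) ^ 2 ≤ A * wt m P s ψ ^ 2 := by
        calc (ω * q s * ((m + 1) * m * wt (m - 1) P s ψ)) ^ 2
            = (ω * q s) ^ 2 * (((m + 1) * m : ℝ) ^ 2 * wt (m-1) P s ψ ^ 2) := by ring
          _ ≤ (ω * q1) ^ 2 * (((m + 1) * m : ℝ) ^ 2 * wt m P s ψ ^ 2) := by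
            apply mul_le_mul hqs _ (by positivity) (by positivity)
            apply mul_le_mul_of_nonneg_left _ (by positivity)
            linarith
          _ = _ := by rw [hA]; ring
      have hv : (ω * q s * (2 * (m + 1) * wt m (dPsi 1 P) s ψ)) ^ 2
          ≤ B * wt m (dPsi 1 P) s ψ ^ 2 := by
        calc (ω * q s * (2 * (m + 1) * wt m (dPsi 1 P) s ψ)) ^ 2
            = (ω * q s) ^ 2 * ((2 * (m + 1) : ℝ) ^ 2 * wt m (dPsi 1 P) s ψ ^ 2) := by ring
          _ ≤ (ω * q1) ^ 2 * ((2 * (m + 1) : ℝ) ^ 2 * wt m (dPsi 1 P) s ψ ^ 2) :=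
            mul_le_mul_of_nonneg_right hqs (by positivity)
          _ = _ := by rw [hB]; ring
      have tri : ∀ x y z : ℝ, (x - y - z) ^ 2 ≤ 3 * x ^ 2 + 3 * y ^ 2 + 3 * z ^ 2 := by
        intro x y z
        nlinarith [sq_nonneg (x + y), sq_nonneg (x + z), sq_nonneg (y - z)]
      have := tri (wt (m+1) (dS 1 P) s ψ - ω * q s * wt (m+1) (dPsi 2 P) s ψ)
        (ω * q s * ((m + 1) * m * wt (m - 1) P s ψ)) (ω * q s * (2 * (m + 1) * wt m (dPsi 1 P) s ψ))
      calc _ = (wt (m+1) (dS 1 P) s ψ - ω * q s * wt (m+1) (dPsi 2 P) s ψ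
          - ω * q s * ((m + 1) * m * wt (m - 1) P s ψ)
          - ω * q s * (2 * (m + 1) * wt m (dPsi 1 P) s ψ)) ^ 2 := by ring
        _ ≤ _ := by linarith
    have hA' : Bd L (fun _ ψ => ∫ s in (0:ℝ)..L, ρ s * wt (m+1) P s ψ) (Z * K) := by
      have : (fun (_:ℝ) ψ => ∫ s in (0:ℝ)..L, ρ s * wt (m+1) P s ψ)
          = wt (m+1) (fun _ ψ => ∫ s in (0:ℝ)..L, ρ s * P s ψ) := by
        funext _ ψ
        unfold wt
        rw [← intervalIntegral.integral_const_mul]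
        congr 1
        funext s
        ring
      rw [this]
      exact hAv.mono (by nlinarith)
    have hper' : PeriodicS L (wt (m+1) P) := by
      intro ψ s
      have := hper ψ s
      simp only [wt] at this ⊢
      rw [this]
    obtain ⟨j0, j1, j2, j3⟩ := HD (wt (m+1) P) (Z * K) sP hper' (by intro s; simp [wt, hP0]) hGr
      hf' hA'
    have n1 : 0 ≤ D * Z * K := by positivity
    have n2 : 0 ≤ E * c * K := by positivity
    have n3 : 0 ≤ M * c * K := by positivity
    have n4 : 0 ≤ c * K := by positivity
    refine ⟨j0.mono (by nlinarith), ?_, ?_, ?_⟩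
    · rw [← e1]
      exact j1.mono (by nlinarith)
    · refine (Bd.le2 2 (2 * E) (by norm_num) (by positivity) (c1.wt _) j2 i0 ?_).mono
        (by nlinarith)
      intro s ψ hψ
      rw [e2, hE]
      simp only [Nat.add_sub_cancel]
      push_cast
      nlinarith [sq_nonneg (wt (m+1) (dPsi 1 P) s ψ + 2 * ((m + 1) * wt m P s ψ))]
    · refine (Bd.le3 3 (12 * E) (3 * M) (by norm_num) (by positivity) (by positivity) (cPP.wt _)
        j3 i1 i0 ?_).mono (by nlinarith)
      intro s ψ hψ
      have w1 := wt_sq_le (Nat.sub_le m 1) P s ψ hψ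
      have w2 := mul_le_mul_of_nonneg_left w1 pM
      rw [e3]
      have tri : ∀ x y z : ℝ, x ^ 2 ≤ 3 * (x + y + z) ^ 2 + 3 * y ^ 2 + 3 * z ^ 2 := by
        intro x y z
        nlinarith [sq_nonneg (x + y + z + y), sq_nonneg (x + y + z + z), sq_nonneg (y - z)]
      have := tri (wt (m+1) (dPsi 2 P) s ψ) (2 * (m + 1) * wt m (dPsi 1 P) s ψ)
        ((m + 1) * m * wt (m - 1) P s ψ)
      have r1 : (2 * (m + 1) * wt m (dPsi 1 P) s ψ) ^ 2 = 4 * E * wt m (dPsi 1 P) s ψ ^ 2 := by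
        rw [hE]; ring
      have r2 : ((m + 1) * m * wt (m - 1) P s ψ) ^ 2 = M * wt (m-1) P s ψ ^ 2 := by
        rw [hM]; ring
      rw [r1, r2] at this
      linarith

/-- the boundary lift -/
noncomputable def lift (β : ℝ → ℝ) : ℝ → ℝ → ℝ := fun s ψ => β s * Real.exp (-ψ)

theorem lift_cont {β : ℝ → ℝ} (hβ : Continuous β) : Cont2 (lift β) :=
  Continuous.mul (hβ.comp continuous_fst) (Real.continuous_exp.comp continuous_snd.neg)

theorem lift_smooth {β : ℝ → ℝ} (hβ : ContDiff ℝ (⊤ : ℕ∞) β) : Smooth2 (lift β) :=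
  (smooth2_s hβ).mul (smooth2_p (f := fun ψ => Real.exp (-ψ)) (by fun_prop))

theorem dS_lift {β : ℝ → ℝ} (hβ : ContDiff ℝ (⊤ : ℕ∞) β) : dS 1 (lift β) = lift (deriv β) := by
  funext s ψ
  apply dS_of_hasDerivAt
  exact ((hβ.differentiable (by simp)) s).hasDerivAt.mul_const _

theorem dPsi_lift (β : ℝ → ℝ) : dPsi 1 (lift β) = lift (fun s => - β s) := by
  funext s ψ
  apply dPsi_of_hasDerivAt
  refine HasDerivAt.congr_deriv (((hasDerivAt_neg ψ).exp).const_mul (β s)) ?_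
  simp [lift]

theorem dPsi2_lift (β : ℝ → ℝ) : dPsi 2 (lift β) = lift β := by
  rw [dPsi_succ 1, dPsi_lift, dPsi_lift]
  simp

theorem lift_bd (m : ℕ) : ∃ C > (0:ℝ), ∀ (L : ℝ) (β : ℝ → ℝ), 0 < L → Continuous β →
    Bd L (wt m (lift β)) (C * ∫ s in (0:ℝ)..L, β s ^ 2) := by
  refine ⟨((2 * m).factorial : ℝ) * Real.exp 1, by positivity, ?_⟩
  intro L β hL hβ
  apply Bd_of_IR' hL.le ((lift_cont hβ).wt m)
  intro R hR
  have hR0 : 0 ≤ R := by linarith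
  have hβ2 : 0 ≤ ∫ s in (0:ℝ)..L, β s ^ 2 :=
    intervalIntegral.integral_nonneg hL.le fun s _ => sq_nonneg _
  have cβ : Cont2 (fun s ψ => Real.exp (-ψ) * β s ^ 2) :=
    Continuous.mul (Real.continuous_exp.comp continuous_snd.neg)
      ((hβ.comp continuous_fst).pow 2)
  refine le_trans (IR_mono hL.le hR0 (g := fun s ψ => (((2 * m).factorial : ℝ) * Real.exp 1) *
    (Real.exp (-ψ) * β s ^ 2)) (Cont2.sq ((lift_cont hβ).wt m)) (cβ.const_mul' _) ?_) ?_
  · intro s ψ h0 h1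
    have hfac := Real.pow_div_factorial_le_exp (1 + ψ) (by linarith) (2 * m)
    rw [div_le_iff₀ (by positivity)] at hfac
    have e0 : wt m (lift β) s ψ ^ 2
      = (1 + ψ) ^ (2 * m) * (Real.exp (-ψ) * Real.exp (-ψ)) * β s ^ 2 := by
      unfold wt lift; ring
    have e1 : Real.exp (1 + ψ) * Real.exp (-ψ) = Real.exp 1 := by
      rw [← Real.exp_add]; congr 1; ring
    rw [e0]
    calc (1 + ψ) ^ (2 * m) * (Real.exp (-ψ) * Real.exp (-ψ)) * β s ^ 2
        ≤ (Real.exp (1 + ψ) * ((2 * m).factorial : ℝ)) * (Real.exp (-ψ) * Real.exp (-ψ))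
          * β s ^ 2 := by gcongr
      _ = ((2 * m).factorial : ℝ) * (Real.exp (1 + ψ) * Real.exp (-ψ)) *
          (Real.exp (-ψ) * β s ^ 2) := by ring
      _ = _ := by rw [e1]
  · rw [IR_mul]
    apply mul_le_mul_of_nonneg_left _ (by positivity)
    unfold IR
    simp only [intervalIntegral.integral_const_mul, intervalIntegral.integral_mul_const]
    have : ∫ ψ in (0:ℝ)..R, Real.exp (-ψ) = 1 - Real.exp (-R) := by
      rw [intervalIntegral.integral_comp_neg (fun x => Real.exp x)]
      simp
    rw [this]
    have := Real.exp_pos (-R)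
    nlinarith

theorem level {L : ℝ} (hL : 0 < L) {q : ℝ → ℝ} (hq : Continuous q) {q0 q1 : ℝ}
    (hq0 : 0 < q0) (hqb : ∀ s, q0 ≤ q s ∧ q s ≤ q1) {ω : ℝ} (hω : 0 < ω)
    {ρ : ℝ → ℝ} (hρ : Continuous ρ) (hpos : ∀ s, 0 < ρ s) (m : ℕ) :
    ∃ C > (0:ℝ), ∀ (Q : ℝ → ℝ → ℝ) (b : ℝ → ℝ) (K : ℝ), Smooth2 Q → PeriodicS L Q →
      ContDiff ℝ (⊤ : ℕ∞) b → Periodic b L → (∀ s, Q s 0 = b s) →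
      Gr L Q → Bd L (wt m (fun s ψ => dS 1 Q s ψ - ω * q s * dPsi 2 Q s ψ)) K →
      Bd L (wt m (fun _ ψ => ∫ s in (0:ℝ)..L, ρ s * Q s ψ)) K →
      (∫ s in (0:ℝ)..L, b s ^ 2) ≤ K → (∫ s in (0:ℝ)..L, deriv b s ^ 2) ≤ K →
      Bd L (wt m Q) (C * K) ∧ Bd L (wt m (dS 1 Q)) (C * K) ∧ Bd L (wt m (dPsi 1 Q)) (C * K) ∧
        Bd L (wt m (dPsi 2 Q)) (C * K) := by
  obtain ⟨C, hC, H⟩ := level0 hL hq hq0 hqb hω hρ hpos m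
  obtain ⟨D, hD, HD⟩ := lift_bd m
  obtain ⟨D0, hD0, HD0⟩ := lift_bd 0
  have hq1 : 0 < q1 := lt_of_lt_of_le hq0 ((hqb 0).1.trans (hqb 0).2)
  obtain ⟨I, hI⟩ : ∃ I, I = ∫ s in (0:ℝ)..L, ρ s ^ 2 := ⟨_, rfl⟩
  have pI : 0 ≤ I := by
    rw [hI]; exact intervalIntegral.integral_nonneg hL.le fun s _ => sq_nonneg _
  obtain ⟨Z, hZ⟩ : ∃ Z : ℝ, Z = 3 + 3 * D + 3 * (ω * q1) ^ 2 * D + 2 * D * L * I := ⟨_, rfl⟩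
  have pZ : 0 < Z := by rw [hZ]; positivity
  refine ⟨2 * (C * Z) + 2 * D, by positivity, ?_⟩
  intro Q b K hQ hper hb hbper hQ0 hG hf hA hb0 hb1
  have hK := hf.nonneg
  have hb0c : Continuous b := hb.continuous
  have hb1c : Continuous (deriv b) := hb.continuous_deriv (by simp)
  have lb : Bd L (wt m (lift b)) (D * K) :=
    (HD L b hL hb0c).mono (mul_le_mul_of_nonneg_left hb0 hD.le)
  have lb' : Bd L (wt m (lift (deriv b))) (D * K) :=
    (HD L _ hL hb1c).mono (mul_le_mul_of_nonneg_left hb1 hD.le)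
  have lnb : Bd L (wt m (lift (fun s => - b s))) (D * K) := by
    have := HD L (fun s => - b s) hL hb0c.neg
    simp only [neg_sq] at this
    exact this.mono (mul_le_mul_of_nonneg_left hb0 hD.le)
  have sl := lift_smooth hb
  have sP : Smooth2 (fun s ψ => Q s ψ - lift b s ψ) := hQ.sub sl
  obtain ⟨P, hPdef⟩ : ∃ P : ℝ → ℝ → ℝ, P = fun s ψ => Q s ψ - lift b s ψ := ⟨_, rfl⟩
  rw [← hPdef] at sP
  have eS : dS 1 P = fun s ψ => dS 1 Q s ψ - lift (deriv b) s ψ := by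
    funext s ψ
    rw [hPdef]
    apply dS_of_hasDerivAt
    rw [← dS_lift hb]
    exact (hQ.hS s ψ).sub (sl.hS s ψ)
  have e1 : dPsi 1 P = fun s ψ => dPsi 1 Q s ψ - dPsi 1 (lift b) s ψ := by
    funext s ψ
    rw [hPdef]
    apply dPsi_of_hasDerivAt
    exact (hQ.hP s ψ).sub (sl.hP s ψ)
  have e2 : dPsi 2 P = fun s ψ => dPsi 2 Q s ψ - dPsi 2 (lift b) s ψ := by
    funext s ψ
    rw [dPsi_succ 1, e1]
    apply dPsi_of_hasDerivAt
    rw [dPsi_succ 1, dPsi_succ 1]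
    exact (hQ.dP1.hP s ψ).sub (sl.dP1.hP s ψ)
  rw [dPsi_lift] at e1
  rw [dPsi2_lift] at e2
  have hperP : PeriodicS L P := by
    intro ψ s
    have h1 := hper ψ s
    have h2 := hbper s
    simp only [hPdef, lift] at h1 ⊢
    rw [h1, h2]
  have hP0 : ∀ s, P s 0 = 0 := by intro s; simp [hPdef, hQ0, lift]
  have cQ : Cont2 Q := hQ.cont
  have cl : Cont2 (lift b) := sl.cont
  have hGP : Gr L P := by
    obtain ⟨K', hK'⟩ := hG
    have l0 := HD0 L b hL hb0c
    rw [wt_zero] at l0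
    obtain ⟨J, hJ⟩ : ∃ J, J = D0 * ∫ s in (0:ℝ)..L, b s ^ 2 := ⟨_, rfl⟩
    rw [← hJ] at l0
    have hJ0 := l0.nonneg
    refine ⟨2 * K' + 2 * J, fun R hR => ?_⟩
    have hR0 : 0 ≤ R := by linarith
    have h1 := hK' R hR
    have h2 := l0.IR_le hL.le cl hR0
    refine le_trans (IR_mono hL.le hR0 (g := fun s ψ => 2 * Q s ψ ^ 2 + 2 * lift b s ψ ^ 2)
      (Cont2.sq sP.cont) ((cQ.sq.const_mul' 2).add' (cl.sq.const_mul' 2)) ?_) ?_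
    · intro s ψ _ _
      rw [hPdef]
      nlinarith [sq_nonneg (Q s ψ + lift b s ψ)]
    · rw [IR_add (cQ.sq.const_mul' 2) (cl.sq.const_mul' 2), IR_mul, IR_mul]
      have : J ≤ J * R ^ 2 := le_mul_of_one_le_right hJ0 (one_le_pow₀ hR)
      linarith
  have cq : Cont2 (fun s _ => ω * q s) := continuous_const.mul (hq.comp continuous_fst)
  have hf' : Bd L (wt m (fun s ψ => dS 1 P s ψ - ω * q s * dPsi 2 P s ψ)) (Z * K) := by
    have cont : Cont2 (fun s ψ => dS 1 P s ψ - ω * q s * dPsi 2 P s ψ) :=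
      Continuous.sub sP.dS1.cont (Continuous.mul cq (sP.dPk 2).cont)
    refine (Bd.le3 3 3 (3 * (ω * q1) ^ 2) (by norm_num) (by norm_num) (by positivity) (cont.wt m)
      hf lb' lb ?_).mono ?_
    · intro s ψ hψ
      rw [eS, e2]
      have hqs : (ω * q s) ^ 2 ≤ (ω * q1) ^ 2 := by
        apply pow_le_pow_left₀
        · have := hq0.trans_le (hqb s).1
          positivity
        · exact mul_le_mul_of_nonneg_left (hqb s).2 hω.le
      have tri : ∀ x y z : ℝ, (x - y + z) ^ 2 ≤ 3 * x ^ 2 + 3 * y ^ 2 + 3 * z ^ 2 := by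
        intro x y z
        nlinarith [sq_nonneg (x + y), sq_nonneg (x - z), sq_nonneg (y + z)]
      have := tri (wt m (fun s ψ => dS 1 Q s ψ - ω * q s * dPsi 2 Q s ψ) s ψ)
        (wt m (lift (deriv b)) s ψ) (ω * q s * wt m (lift b) s ψ)
      have h3 : (ω * q s * wt m (lift b) s ψ) ^ 2 ≤ (ω * q1) ^ 2 * wt m (lift b) s ψ ^ 2 := by
        rw [mul_pow]
        exact mul_le_mul_of_nonneg_right hqs (sq_nonneg _)
      refine le_trans (le_of_eq ?_) (this.trans (by linarith))
      unfold wt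
      ring
    · have : 0 ≤ 2 * D * L * I * K := by positivity
      rw [hZ]
      linarith
  have hA' : Bd L (wt m (fun _ ψ => ∫ s in (0:ℝ)..L, ρ s * P s ψ)) (Z * K) := by
    have cρP : Cont2 (fun s ψ => ρ s * P s ψ) :=
      Continuous.mul (hρ.comp continuous_fst) sP.cont
    have cAv : Cont2 (fun _ ψ => ∫ s in (0:ℝ)..L, ρ s * P s ψ) :=
      (cρP.inner L).comp continuous_snd
    obtain ⟨β, hβ⟩ : ∃ β, β = ∫ s in (0:ℝ)..L, ρ s * b s := ⟨_, rfl⟩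
    have lβ := HD L (fun _ => β) hL continuous_const
    have hβ2 : β ^ 2 ≤ I * K := by
      have := cs_interval hL.le (u := ρ) (v := b) ((hρ.pow 2).intervalIntegrable _ _)
        ((hb0c.pow 2).intervalIntegrable _ _) ((hρ.mul hb0c).intervalIntegrable _ _)
      rw [hβ]
      rw [← hI] at this
      exact this.trans (mul_le_mul_of_nonneg_left hb0 pI)
    have lβ' : Bd L (wt m (lift (fun _ => β))) (D * (L * (I * K))) := by
      refine lβ.mono (mul_le_mul_of_nonneg_left ?_ hD.le)
      simp only [intervalIntegral.integral_const, smul_eq_mul, sub_zero]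
      exact mul_le_mul_of_nonneg_left hβ2 hL.le
    refine (Bd.le2 2 2 (by norm_num) (by norm_num) (cAv.wt m) hA lβ' ?_).mono ?_
    · intro s ψ hψ
      have hAe : ∫ s in (0:ℝ)..L, ρ s * P s ψ
          = (∫ s in (0:ℝ)..L, ρ s * Q s ψ) - β * Real.exp (-ψ) := by
        rw [hβ, ← intervalIntegral.integral_mul_const, ← intervalIntegral.integral_sub]
        · congr 1
          funext s
          rw [hPdef]
          simp only [lift]
          ring
        · exact (hρ.mul (cQ.slS ψ)).intervalIntegrable _ _
        · exact ((hρ.mul hb0c).mul continuous_const).intervalIntegrable _ _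
      simp only [wt, lift, hAe]
      generalize ∫ s in (0:ℝ)..L, ρ s * Q s ψ = x
      nlinarith [sq_nonneg ((1 + ψ) ^ m * x + (1 + ψ) ^ m * (β * Real.exp (-ψ)))]
    · have h1 : 0 ≤ D * K := by positivity
      have h2 : 0 ≤ (ω * q1) ^ 2 * D * K := by positivity
      rw [hZ]
      linarith
  obtain ⟨j0, j1, j2, j3⟩ := H P (Z * K) sP hperP hP0 hGP hf' hA'
  have fin : ∀ u v w : ℝ → ℝ → ℝ, Cont2 u → (w = fun s ψ => u s ψ - v s ψ) →
      Bd L (wt m w) (C * (Z * K)) → Bd L (wt m v) (D * K) →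
      Bd L (wt m u) ((2 * (C * Z) + 2 * D) * K) := by
    intro u v w hu hw bw bv
    refine (Bd.le2 2 2 (by norm_num) (by norm_num) (hu.wt m) bw bv ?_).mono (le_of_eq (by ring))
    intro s ψ _
    have : wt m w s ψ = wt m u s ψ - wt m v s ψ := by
      rw [hw]; unfold wt; ring
    rw [this]
    nlinarith [sq_nonneg (wt m u s ψ - 2 * wt m v s ψ)]
  exact ⟨fin _ _ _ cQ hPdef j0 lb, fin _ _ _ hQ.dS1.cont eS j1 lb',
    fin _ _ _ hQ.dP1.cont e1 j2 lnb, fin _ _ _ (hQ.dPk 2).cont e2 j3 lb⟩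

theorem int_inv_sq {x y : ℝ} (hx : 0 ≤ x) (hxy : x ≤ y) :
    ∫ t in x..y, ((1 + t) ^ 2)⁻¹ ≤ 1 := by
  have hne : ∀ t ∈ uIcc x y, (1 + t) ≠ 0 := by
    intro t ht
    rw [uIcc_of_le hxy] at ht
    have := ht.1
    linarith
  have : ∫ t in x..y, ((1 + t) ^ 2)⁻¹ = (-(1 + y)⁻¹) - (-(1 + x)⁻¹) := by
    apply intervalIntegral.integral_eq_sub_of_hasDerivAt (f := fun t => -(1 + t)⁻¹)
    · intro t ht
      have h1 : HasDerivAt (fun t : ℝ => 1 + t) 1 t := by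
        simpa using (hasDerivAt_id t).const_add 1
      refine HasDerivAt.congr_deriv (h1.inv (hne t ht)).neg ?_
      have := hne t ht
      field_simp
    · apply ContinuousOn.intervalIntegrable
      apply ContinuousOn.inv₀ (by fun_prop)
      intro t ht
      exact pow_ne_zero 2 (hne t ht)
  rw [this]
  have h1 : (1 + x)⁻¹ ≤ 1 := inv_le_one_of_one_le₀ (by linarith)
  have h2 : 0 ≤ (1 + y)⁻¹ := by
    have : 0 ≤ 1 + y := by linarith
    positivity
  linarith

theorem ii_inv_pow {x y : ℝ} (hx : 0 ≤ x) (hxy : x ≤ y) (n : ℕ) :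
    IntervalIntegrable (fun t : ℝ => ((1 + t) ^ n)⁻¹) volume x y := by
  apply ContinuousOn.intervalIntegrable
  apply ContinuousOn.inv₀ (by fun_prop)
  intro t ht
  rw [uIcc_of_le hxy] at ht
  have := ht.1
  have : 0 < 1 + t := by linarith
  positivity

theorem ode_decay {B B' f : ℝ → ℝ} (m : ℕ) {n : ℝ} (hn : 0 ≤ n)
    (hB : ∀ x, HasDerivAt B (B' x) x) (hB' : ∀ x, 0 < x → HasDerivAt B' (- f x) x)
    (hB'c : Continuous B') (hf : Continuous f) (hlim : Tendsto B atTop (nhds 0))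
    (hN : ∀ R, 0 ≤ R → ∫ t in (0:ℝ)..R, ((1 + t) ^ (m + 4) * f t) ^ 2 ≤ n ^ 2) :
    (∀ x, 0 < x → |B' x| ≤ n * ((1 + x) ^ (m + 3))⁻¹) ∧
    (∀ x, 0 < x → |B x| ≤ n * ((1 + x) ^ (m + 1))⁻¹) := by
  have hNxy : ∀ x y, 0 ≤ x → x ≤ y → ∫ t in x..y, ((1 + t) ^ (m + 4) * f t) ^ 2 ≤ n ^ 2 := by
    intro x y hx hxy
    refine le_trans ?_ (hN y (hx.trans hxy))
    apply intervalIntegral.integral_mono_interval hx hxy le_rfl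
    · exact Eventually.of_forall fun t => sq_nonneg _
    · exact Continuous.intervalIntegrable (by fun_prop) _ _
  have stepa : ∀ x y, 0 < x → x ≤ y → |B' y - B' x| ≤ n * ((1 + x) ^ (m + 3))⁻¹ := by
    intro x y hx hxy
    have e : B' y - B' x = - ∫ t in x..y, f t := by
      rw [← intervalIntegral.integral_neg]
      symm
      apply intervalIntegral.integral_eq_sub_of_hasDerivAt
      · intro t ht
        rw [uIcc_of_le hxy] at ht
        exact hB' t (hx.trans_le ht.1)
      · exact (hf.neg).intervalIntegrable _ _
    have hsq : (∫ t in x..y, f t) ^ 2 ≤ (n * ((1 + x) ^ (m + 3))⁻¹) ^ 2 := by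
      have h1 := cs_interval hxy (u := fun t => ((1 + t) ^ (m + 4))⁻¹)
        (v := fun t => (1 + t) ^ (m + 4) * f t)
        (by
          have := ii_inv_pow hx.le hxy ((m + 4) * 2)
          simpa only [pow_mul, inv_pow] using this)
        (Continuous.intervalIntegrable (by fun_prop) _ _)
        (by
          apply ContinuousOn.intervalIntegrable
          apply ContinuousOn.mul _ (by fun_prop)
          apply ContinuousOn.inv₀ (by fun_prop)
          intro t ht
          rw [uIcc_of_le hxy] at ht
          have := ht.1
          have : 0 < 1 + t := by linarith
          positivity)
      have h2 : ∫ t in x..y, ((1 + t) ^ (m + 4))⁻¹ * ((1 + t) ^ (m + 4) * f t)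
          = ∫ t in x..y, f t := by
        apply intervalIntegral.integral_congr
        intro t ht
        rw [uIcc_of_le hxy] at ht
        have := ht.1
        have h3 : (1 + t) ^ (m + 4) ≠ 0 := by
          have : 0 < 1 + t := by linarith
          positivity
        simp only
        rw [← mul_assoc, inv_mul_cancel₀ h3, one_mul]
      rw [h2] at h1
      have h4 : ∫ t in x..y, (((1 + t) ^ (m + 4))⁻¹) ^ 2 ≤ (((1 + x) ^ (m + 3))⁻¹) ^ 2 := by
        calc ∫ t in x..y, (((1 + t) ^ (m + 4))⁻¹) ^ 2
            ≤ ∫ t in x..y, (((1 + x) ^ (m + 3))⁻¹) ^ 2 * ((1 + t) ^ 2)⁻¹ := by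
              apply intervalIntegral.integral_mono_on hxy
              · have := ii_inv_pow hx.le hxy ((m + 4) * 2)
                simpa only [pow_mul, inv_pow] using this
              · exact (ii_inv_pow hx.le hxy 2).const_mul _
              · intro t ht
                have h0 : 0 < 1 + x := by linarith
                have ht1 : 1 + x ≤ 1 + t := by linarith [ht.1]
                have h00 : 0 < 1 + t := by linarith
                have e1 : (((1 + t) ^ (m + 4))⁻¹) ^ 2
                    = (((1 + t) ^ (m + 3))⁻¹) ^ 2 * ((1 + t) ^ 2)⁻¹ := by
                  rw [pow_succ (1 + t) (m + 3)]
                  field_simp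
                rw [e1]
                gcongr
          _ = (((1 + x) ^ (m + 3))⁻¹) ^ 2 * ∫ t in x..y, ((1 + t) ^ 2)⁻¹ := by
              rw [intervalIntegral.integral_const_mul]
          _ ≤ (((1 + x) ^ (m + 3))⁻¹) ^ 2 * 1 :=
              mul_le_mul_of_nonneg_left (int_inv_sq hx.le hxy) (sq_nonneg _)
          _ = _ := mul_one _
      have h5 := hNxy x y hx.le hxy
      calc (∫ t in x..y, f t) ^ 2 ≤ _ := h1
        _ ≤ (((1 + x) ^ (m + 3))⁻¹) ^ 2 * n ^ 2 := by
            apply mul_le_mul h4 h5 _ (sq_nonneg _)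
            exact intervalIntegral.integral_nonneg hxy fun t _ => sq_nonneg _
        _ = _ := by ring
    rw [e, abs_neg]
    apply abs_le_of_sq_le_sq hsq
    have : 0 < 1 + x := by linarith
    positivity
  have stepb : ∀ x, 0 < x → |B' x| ≤ n * ((1 + x) ^ (m + 3))⁻¹ := by
    intro x hx
    by_contra hcon
    push Not at hcon
    set ε := n * ((1 + x) ^ (m + 3))⁻¹ with hε
    have hev : ∀ᶠ y in atTop, |B y| < 1 := by
      have := hlim.abs
      rw [abs_zero] at this
      exact this.eventually_lt_const one_pos
    have hev2 : ∀ᶠ y in atTop, (1 + |B x|) / (|B' x| - ε) + x < y := eventually_gt_atTop _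
    obtain ⟨y, hy1, hy2, hy3⟩ := (hev.and (hev2.and (eventually_ge_atTop x))).exists
    have hδ : 0 < |B' x| - ε := by linarith
    have h3 : 1 + |B x| < (y - x) * (|B' x| - ε) := by
      rw [← div_lt_iff₀ hδ]; linarith
    have hmv : |(B y - y * B' x) - (B x - x * B' x)| ≤ ε * |y - x| := by
      have := Convex.norm_image_sub_le_of_norm_hasDerivWithin_le
        (f := fun y => B y - y * B' x) (f' := fun y => B' y - B' x) (C := ε) (s := Icc x y)
        (x := x) (y := y) (fun t _ => by
          have h1 : HasDerivAt (fun y => y * B' x) (1 * B' x) t :=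
            (hasDerivAt_id t).mul_const _
          rw [one_mul] at h1
          exact ((hB t).sub h1).hasDerivWithinAt)
        (fun t ht => by
          rw [Real.norm_eq_abs]
          exact stepa x t hx ht.1) (convex_Icc x y) (left_mem_Icc.2 hy3) (right_mem_Icc.2 hy3)
      simpa [Real.norm_eq_abs] using this
    rw [abs_of_nonneg (by linarith : 0 ≤ y - x)] at hmv
    have h4 : |(y - x) * B' x| ≤ |B y| + |B x| + ε * (y - x) := by
      have e : (y - x) * B' x = B y - B x - ((B y - y * B' x) - (B x - x * B' x)) := by ring
      rw [e]
      have a1 := abs_sub (B y - B x) ((B y - y * B' x) - (B x - x * B' x))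
      have a2 := abs_sub (B y) (B x)
      linarith
    rw [abs_mul, abs_of_nonneg (by linarith : 0 ≤ y - x)] at h4
    nlinarith
  refine ⟨stepb, ?_⟩
  intro x hx
  have hc : ∀ y, x ≤ y → |B y - B x| ≤ n * ((1 + x) ^ (m + 1))⁻¹ := by
    intro y hxy
    have e : B y - B x = ∫ t in x..y, B' t := by
      symm
      apply intervalIntegral.integral_eq_sub_of_hasDerivAt
      · intro t ht
        exact hB t
      · exact hB'c.intervalIntegrable _ _
    rw [e]
    have h0 : 0 < 1 + x := by linarith
    calc |∫ t in x..y, B' t| ≤ ∫ t in x..y, |B' t| :=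
          intervalIntegral.abs_integral_le_integral_abs hxy
      _ ≤ ∫ t in x..y, (n * ((1 + x) ^ (m + 1))⁻¹) * ((1 + t) ^ 2)⁻¹ := by
          apply intervalIntegral.integral_mono_on hxy
          · exact hB'c.abs.intervalIntegrable _ _
          · exact (ii_inv_pow hx.le hxy 2).const_mul _
          · intro t ht
            refine (stepb t (hx.trans_le ht.1)).trans ?_
            have ht1 : 1 + x ≤ 1 + t := by linarith [ht.1]
            have h00 : 0 < 1 + t := by linarith
            have e1 : ((1 + t) ^ (m + 3))⁻¹ = ((1 + t) ^ (m + 1))⁻¹ * ((1 + t) ^ 2)⁻¹ := by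
              rw [← mul_inv, ← pow_add]
            rw [e1, ← mul_assoc]
            gcongr
      _ = (n * ((1 + x) ^ (m + 1))⁻¹) * ∫ t in x..y, ((1 + t) ^ 2)⁻¹ := by
          rw [intervalIntegral.integral_const_mul]
      _ ≤ (n * ((1 + x) ^ (m + 1))⁻¹) * 1 :=
          mul_le_mul_of_nonneg_left (int_inv_sq hx.le hxy) (by positivity)
      _ = _ := mul_one _
  have hl : Tendsto (fun y => |B y - B x|) atTop (nhds |0 - B x|) := (hlim.sub_const _).abs
  rw [zero_sub, abs_neg] at hl
  exact le_of_tendsto hl ((eventually_ge_atTop x).mono hc)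

theorem decay_bd {L : ℝ} (hL : 0 < L) {h : ℝ → ℝ} (hh : Continuous h) (m : ℕ) {n : ℝ}
    (hd : ∀ x, 0 < x → |h x| ≤ n * ((1 + x) ^ (m + 1))⁻¹) :
    Bd L (wt m (fun _ ψ => h ψ)) (L * n ^ 2) := by
  have hc : Cont2 (fun _ ψ => h ψ) := hh.comp continuous_snd
  apply Bd_of_IR' hL.le (hc.wt m)
  intro R hR
  have hR0 : 0 ≤ R := by linarith
  have hcc : Continuous (fun ψ => ((1 + ψ) ^ m * h ψ) ^ 2) := by fun_prop
  have h1 : ∫ ψ in (0:ℝ)..R, ((1 + ψ) ^ m * h ψ) ^ 2 ≤ n ^ 2 := by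
    calc ∫ ψ in (0:ℝ)..R, ((1 + ψ) ^ m * h ψ) ^ 2
        ≤ ∫ ψ in (0:ℝ)..R, n ^ 2 * ((1 + ψ) ^ 2)⁻¹ := by
          apply intervalIntegral.integral_mono_on_of_le_Ioo hR0
            (hcc.intervalIntegrable _ _) ((ii_inv_pow le_rfl hR0 2).const_mul _)
          intro x hx
          have h0 : 0 < 1 + x := by linarith [hx.1]
          have h2 := hd x hx.1
          have h3 : (1 + x) ^ m * |h x| ≤ n * (1 + x)⁻¹ := by
            calc (1 + x) ^ m * |h x| ≤ (1 + x) ^ m * (n * ((1 + x) ^ (m + 1))⁻¹) :=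
                  mul_le_mul_of_nonneg_left h2 (by positivity)
              _ = n * (1 + x)⁻¹ := by
                  rw [pow_succ]; field_simp
          have h4 : ((1 + x) ^ m * h x) ^ 2 = ((1 + x) ^ m * |h x|) ^ 2 := by
            rw [mul_pow, mul_pow, sq_abs]
          rw [h4]
          calc ((1 + x) ^ m * |h x|) ^ 2 ≤ (n * (1 + x)⁻¹) ^ 2 :=
                pow_le_pow_left₀ (by positivity) h3 2
            _ = _ := by rw [mul_pow, inv_pow]
      _ = n ^ 2 * ∫ ψ in (0:ℝ)..R, ((1 + ψ) ^ 2)⁻¹ := by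
          rw [intervalIntegral.integral_const_mul]
      _ ≤ n ^ 2 * 1 := mul_le_mul_of_nonneg_left (int_inv_sq le_rfl hR0) (sq_nonneg _)
      _ = _ := mul_one _
  have h2 : IR L R (fun s ψ => wt m (fun _ ψ => h ψ) s ψ ^ 2)
      = L * ∫ ψ in (0:ℝ)..R, ((1 + ψ) ^ m * h ψ) ^ 2 := by
    unfold IR wt
    simp [intervalIntegral.integral_const]
  rw [h2]
  exact mul_le_mul_of_nonneg_left h1 hL.le

theorem mean_sq {L : ℝ} (hL : 0 < L) {ρ : ℝ → ℝ} (hρ : Continuous ρ) {h : ℝ → ℝ → ℝ}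
    (hh : Cont2 h) (ψ : ℝ) : (∫ s in (0:ℝ)..L, ρ s * h s ψ) ^ 2 ≤
      (∫ s in (0:ℝ)..L, ρ s ^ 2) * ∫ s in (0:ℝ)..L, h s ψ ^ 2 :=
  cs_interval hL.le (u := ρ) (v := fun s => h s ψ) ((hρ.pow 2).intervalIntegrable _ _)
    (((hh.slS ψ).pow 2).intervalIntegrable _ _) ((hρ.mul (hh.slS ψ)).intervalIntegrable _ _)

theorem mean_int {L : ℝ} (hL : 0 < L) {ρ : ℝ → ℝ} (hρ : Continuous ρ) {h : ℝ → ℝ → ℝ}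
    (hh : Cont2 h) {K : ℝ} (hb : Bd L h K) {R : ℝ} (hR : 0 ≤ R) :
    ∫ ψ in (0:ℝ)..R, (∫ s in (0:ℝ)..L, ρ s * h s ψ) ^ 2 ≤ (∫ s in (0:ℝ)..L, ρ s ^ 2) * K := by
  have pI : 0 ≤ ∫ s in (0:ℝ)..L, ρ s ^ 2 :=
    intervalIntegral.integral_nonneg hL.le fun s _ => sq_nonneg _
  have c1 : Cont2 (fun s ψ => ρ s * h s ψ) := Continuous.mul (hρ.comp continuous_fst) hh
  calc ∫ ψ in (0:ℝ)..R, (∫ s in (0:ℝ)..L, ρ s * h s ψ) ^ 2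
      ≤ ∫ ψ in (0:ℝ)..R, (∫ s in (0:ℝ)..L, ρ s ^ 2) * ∫ s in (0:ℝ)..L, h s ψ ^ 2 := by
        apply intervalIntegral.integral_mono_on hR
        · exact ((c1.inner L).pow 2).intervalIntegrable _ _
        · exact (continuous_const.mul (hh.sq.inner L)).intervalIntegrable _ _
        · intro ψ _
          exact mean_sq hL hρ hh ψ
    _ = (∫ s in (0:ℝ)..L, ρ s ^ 2) * IR L R (fun s ψ => h s ψ ^ 2) := by
        rw [intervalIntegral.integral_const_mul]; rfl
    _ ≤ _ := mul_le_mul_of_nonneg_left (hb.IR_le hL.le hh hR) pI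

theorem wt_mean (L : ℝ) (ρ : ℝ → ℝ) (h : ℝ → ℝ → ℝ) (m : ℕ) :
    wt m (fun _ ψ => ∫ s in (0:ℝ)..L, ρ s * h s ψ)
      = fun _ ψ => ∫ s in (0:ℝ)..L, ρ s * wt m h s ψ := by
  funext _ ψ
  unfold wt
  rw [← intervalIntegral.integral_const_mul]
  congr 1
  funext s
  ring

theorem mean_bd {L : ℝ} (hL : 0 < L) {ρ : ℝ → ℝ} (hρ : Continuous ρ) {h : ℝ → ℝ → ℝ}
    (hh : Cont2 h) (m : ℕ) {K : ℝ} (hb : Bd L (wt m h) K) :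
    Bd L (wt m (fun _ ψ => ∫ s in (0:ℝ)..L, ρ s * h s ψ))
      (L * ((∫ s in (0:ℝ)..L, ρ s ^ 2) * K)) := by
  rw [wt_mean]
  have c1 : Cont2 (fun s ψ => ρ s * wt m h s ψ) :=
    Continuous.mul (hρ.comp continuous_fst) (hh.wt m)
  have c2 : Cont2 (fun _ ψ => ∫ s in (0:ℝ)..L, ρ s * wt m h s ψ) :=
    (c1.inner L).comp continuous_snd
  apply Bd_of_IR' hL.le c2
  intro R hR
  have h2 : IR L R (fun _ ψ => (∫ s in (0:ℝ)..L, ρ s * wt m h s ψ) ^ 2)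
      = L * ∫ ψ in (0:ℝ)..R, (∫ s in (0:ℝ)..L, ρ s * wt m h s ψ) ^ 2 := by
    unfold IR
    simp [intervalIntegral.integral_const]
  rw [h2]
  exact mul_le_mul_of_nonneg_left (mean_int hL hρ (hh.wt m) hb (by linarith)) hL.le

theorem dPsi_smul_s (ρ : ℝ → ℝ) (h : ℝ → ℝ → ℝ) (hh : Smooth2 h) :
    dPsi 1 (fun s ψ => ρ s * h s ψ) = fun s ψ => ρ s * dPsi 1 h s ψ := by
  funext s ψ
  apply dPsi_of_hasDerivAt
  exact (hh.hP s ψ).const_mul _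

theorem hasDerivAt_mean {L : ℝ} {ρ : ℝ → ℝ} (hρ : ContDiff ℝ (⊤ : ℕ∞) ρ) {h : ℝ → ℝ → ℝ}
    (hh : Smooth2 h) (ψ : ℝ) : HasDerivAt (fun ψ => ∫ s in (0:ℝ)..L, ρ s * h s ψ)
      (∫ s in (0:ℝ)..L, ρ s * dPsi 1 h s ψ) ψ := by
  have := hasDerivAt_inner ((smooth2_s hρ).mul hh) L ψ
  rw [dPsi_smul_s ρ h hh] at this
  exact this

theorem zeromode {L : ℝ} (hL : 0 < L) {q : ℝ → ℝ} (hq : ContDiff ℝ (⊤ : ℕ∞) q)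
    {ω : ℝ} (hω : 0 < ω) (m : ℕ) :
    ∃ C > (0:ℝ), ∀ (Q F G : ℝ → ℝ → ℝ) (K : ℝ), Smooth2 Q → PeriodicS L Q → Smooth2 F →
      Smooth2 G → (∀ s : ℝ, ∀ ψ > (0:ℝ),
        dS 1 Q s ψ - ω * q s * dPsi 2 Q s ψ = F s ψ + dPsi 2 G s ψ) →
      Tendsto (fun ψ => ∫ s in (0:ℝ)..L, q s * Q s ψ) atTop (nhds 0) →
      Tendsto (fun ψ => ∫ s in (0:ℝ)..L, G s ψ) atTop (nhds 0) →
      Bd L (wt (m + 4) F) K → (∀ j ≤ 2, Bd L (wt m (dPsi j G)) K) →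
      ∀ i ≤ 2, Bd L (wt m (fun _ ψ => ∫ s in (0:ℝ)..L, q s * dPsi i Q s ψ)) (C * K) := by
  refine ⟨(2 / ω ^ 2) * L ^ 2 + (2 / ω ^ 2) * L ^ 2, by positivity, ?_⟩
  intro Q F G K hQ hper hF hG hpde hAl hGl hFb hGb
  have hK := hFb.nonneg
  have hc1 : Continuous (fun _ : ℝ => (1:ℝ)) := continuous_const
  have hs1 : ContDiff ℝ (⊤ : ℕ∞) (fun _ : ℝ => (1:ℝ)) := contDiff_const
  have i1 : ∫ s in (0:ℝ)..L, (fun _ : ℝ => (1:ℝ)) s ^ 2 = L := by simp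
  have cF : Cont2 F := hF.cont
  have aD : ∀ j, ∀ ψ, HasDerivAt (fun ψ => ∫ s in (0:ℝ)..L, q s * dPsi j Q s ψ)
      (∫ s in (0:ℝ)..L, q s * dPsi (j+1) Q s ψ) ψ := by
    intro j ψ
    rw [dPsi_succ]
    exact hasDerivAt_mean hq (hQ.dPk j) ψ
  have gD : ∀ j, ∀ ψ, HasDerivAt (fun ψ => ∫ s in (0:ℝ)..L, 1 * dPsi j G s ψ)
      (∫ s in (0:ℝ)..L, 1 * dPsi (j+1) G s ψ) ψ := by
    intro j ψ
    rw [dPsi_succ]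
    exact hasDerivAt_mean hs1 (hG.dPk j) ψ
  have gB : ∀ j ≤ 2, Bd L (wt m (fun _ ψ => ∫ s in (0:ℝ)..L, 1 * dPsi j G s ψ)) (L * (L * K)) := by
    intro j hj
    have := mean_bd hL hc1 (hG.dPk j).cont m (hGb j hj)
    rwa [i1] at this
  have fB : Bd L (wt m (fun _ ψ => ∫ s in (0:ℝ)..L, 1 * F s ψ)) (L * (L * K)) := by
    have := mean_bd hL hc1 cF m (hFb.wt_mono (by omega) cF)
    rwa [i1] at this
  obtain ⟨a, ha⟩ : ∃ a : ℕ → ℝ → ℝ, a = fun j ψ => ∫ s in (0:ℝ)..L, q s * dPsi j Q s ψ := ⟨_, rfl⟩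
  obtain ⟨g, hg⟩ : ∃ a : ℕ → ℝ → ℝ, a = fun j ψ => ∫ s in (0:ℝ)..L, 1 * dPsi j G s ψ := ⟨_, rfl⟩
  obtain ⟨f, hf⟩ : ∃ a : ℝ → ℝ, a = fun ψ => ∫ s in (0:ℝ)..L, 1 * F s ψ := ⟨_, rfl⟩
  have aD' : ∀ j ψ, HasDerivAt (a j) (a (j+1) ψ) ψ := by rw [ha]; exact aD
  have gD' : ∀ j ψ, HasDerivAt (g j) (g (j+1) ψ) ψ := by rw [hg]; exact gD
  have gB' : ∀ j ≤ 2, Bd L (wt m (fun _ ψ => g j ψ)) (L * (L * K)) := by rw [hg]; exact gB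
  have fB' : Bd L (wt m (fun _ ψ => f ψ)) (L * (L * K)) := by rw [hf]; exact fB
  have fc : Continuous f := by
    rw [hf]
    simp only [one_mul]
    exact cF.inner L
  have ac : ∀ j, Continuous (a j) := fun j =>
    continuous_iff_continuousAt.2 fun x => (aD' j x).continuousAt
  have gc : ∀ j, Continuous (g j) := fun j =>
    continuous_iff_continuousAt.2 fun x => (gD' j x).continuousAt
  have heq : ∀ ψ, 0 < ψ → ω * a 2 ψ + g 2 ψ = - f ψ := by
    intro ψ hψ
    have h0 : ∫ s in (0:ℝ)..L, dS 1 Q s ψ = 0 := by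
      rw [intervalIntegral.integral_eq_sub_of_hasDerivAt (f := fun s => Q s ψ)]
      · have := hper ψ 0
        simp only [zero_add] at this
        rw [this, sub_self]
      · intro s _
        exact hQ.hS s ψ
      · exact (Cont2.slS hQ.dS1.cont ψ).intervalIntegrable _ _
    have h1 : (fun s => dS 1 Q s ψ) = fun s => (ω * (q s * dPsi 2 Q s ψ) + 1 * F s ψ)
        + 1 * dPsi 2 G s ψ := by
      funext s
      have := hpde s ψ hψ
      linarith
    rw [h1] at h0
    have k1 : Continuous (fun s => q s * dPsi 2 Q s ψ) :=
      hq.continuous.mul (Cont2.slS (hQ.dPk 2).cont ψ)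
    have k2 : Continuous (fun s => 1 * F s ψ) := continuous_const.mul (cF.slS ψ)
    have k3 : Continuous (fun s => 1 * dPsi 2 G s ψ) :=
      continuous_const.mul (Cont2.slS (hG.dPk 2).cont ψ)
    have k1' : Continuous (fun s => ω * (q s * dPsi 2 Q s ψ)) := continuous_const.mul k1
    have k4 : Continuous (fun s => ω * (q s * dPsi 2 Q s ψ) + 1 * F s ψ) := k1'.add k2
    rw [intervalIntegral.integral_add (k4.intervalIntegrable _ _)
      (k3.intervalIntegrable _ _), intervalIntegral.integral_add
      (k1'.intervalIntegrable _ _) (k2.intervalIntegrable _ _),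
      intervalIntegral.integral_const_mul] at h0
    rw [ha, hg, hf]
    simp only
    linarith
  have hnn : Real.sqrt (L * K) ^ 2 = L * K := Real.sq_sqrt (by positivity)
  obtain ⟨d1, d0⟩ := ode_decay (B := fun ψ => ω * a 0 ψ + g 0 ψ) (B' := fun ψ => ω * a 1 ψ + g 1 ψ)
    (f := f) m (Real.sqrt_nonneg (L * K))
    (fun x => ((aD' 0 x).const_mul ω).add (gD' 0 x))
    (fun x hx => by
      rw [← heq x hx]
      exact ((aD' 1 x).const_mul ω).add (gD' 1 x))
    ((continuous_const.mul (ac 1)).add (gc 1)) fc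
    (by
      have h1 : a 0 = fun ψ => ∫ s in (0:ℝ)..L, q s * Q s ψ := by rw [ha]; simp only [dPsi_zero]
      have h2 : g 0 = fun ψ => ∫ s in (0:ℝ)..L, G s ψ := by
        rw [hg]; simp only [dPsi_zero, one_mul]
      rw [← h1] at hAl
      rw [← h2] at hGl
      simpa using (hAl.const_mul ω).add hGl)
    (by
      intro R hR
      have := mean_int hL hc1 (cF.wt (m+4)) hFb hR
      rw [i1] at this
      rw [hnn]
      refine le_trans (le_of_eq ?_) this
      congr 1
      funext ψ
      have := congrFun (congrFun (wt_mean L (fun _ => 1) F (m+4)) 0) ψ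
      rw [← this, hf]
      rfl)
  have b0 : Bd L (wt m (fun _ ψ => ω * a 0 ψ + g 0 ψ)) (L * (L * K)) := by
    have := decay_bd hL ((continuous_const.mul (ac 0)).add (gc 0)) m d0
    rwa [hnn] at this
  have b1 : Bd L (wt m (fun _ ψ => ω * a 1 ψ + g 1 ψ)) (L * (L * K)) := by
    have := decay_bd hL ((continuous_const.mul (ac 1)).add (gc 1)) m
      (n := Real.sqrt (L * K)) (fun x hx => (d1 x hx).trans (by
        have h0 : 1 ≤ 1 + x := by linarith
        gcongr
        · omega))
    rwa [hnn] at this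
  have b2 : Bd L (wt m (fun _ ψ => ω * a 2 ψ + g 2 ψ)) (L * (L * K)) := by
    have cc : Cont2 (fun _ ψ => ω * a 2 ψ + g 2 ψ) :=
      Continuous.comp (g := fun ψ => ω * a 2 ψ + g 2 ψ)
        ((continuous_const.mul (ac 2)).add (gc 2)) continuous_snd
    refine (Bd.le1 1 zero_le_one (cc.wt m) fB' ?_).mono (le_of_eq (one_mul _))
    intro s ψ hψ
    simp only [wt, heq ψ hψ]
    apply le_of_eq
    ring
  have fin : ∀ i ≤ 2, Bd L (wt m (fun _ ψ => ω * a i ψ + g i ψ)) (L * (L * K)) →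
      Bd L (wt m (fun _ ψ => a i ψ)) (((2 / ω ^ 2) * L ^ 2 + (2 / ω ^ 2) * L ^ 2) * K) := by
    intro i hi hb
    have cc : Cont2 (fun _ ψ => a i ψ) := (ac i).comp continuous_snd
    refine (Bd.le2 (2 / ω ^ 2) (2 / ω ^ 2) (by positivity) (by positivity) (cc.wt m) hb
      (gB' i hi) ?_).mono (le_of_eq (by ring))
    intro s ψ hψ
    simp only [wt]
    generalize (1 + ψ) ^ m = w
    have : (w * a i ψ) ^ 2 = (1 / ω ^ 2) * (w * (ω * a i ψ + g i ψ) - w * g i ψ) ^ 2 := by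
      field_simp; ring
    rw [this]
    have e : 2 / ω ^ 2 * (w * (ω * a i ψ + g i ψ)) ^ 2 + 2 / ω ^ 2 * (w * g i ψ) ^ 2
      = (1 / ω ^ 2) * (2 * (w * (ω * a i ψ + g i ψ)) ^ 2 + 2 * (w * g i ψ) ^ 2) := by ring
    rw [e]
    apply mul_le_mul_of_nonneg_left _ (by positivity)
    nlinarith [sq_nonneg (w * (ω * a i ψ + g i ψ) + w * g i ψ)]
  intro i hi
  have e : (fun (_:ℝ) ψ => ∫ s in (0:ℝ)..L, q s * dPsi i Q s ψ) = fun _ ψ => a i ψ := by rw [ha]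
  rw [e]
  interval_cases i
  · exact fin 0 (by norm_num) b0
  · exact fin 1 (by norm_num) b1
  · exact fin 2 (by norm_num) b2

theorem int_dS1_zero {L : ℝ} {h : ℝ → ℝ → ℝ} (hh : Smooth2 h) (hp : PeriodicS L h) (ψ : ℝ) :
    ∫ s in (0:ℝ)..L, dS 1 h s ψ = 0 := by
  rw [intervalIntegral.integral_eq_sub_of_hasDerivAt (f := fun s => h s ψ)
    (fun s _ => hh.hS s ψ)
    ((Cont2.slS (h := dS 1 h) hh.dS1.cont ψ).intervalIntegrable _ _)]
  have := hp ψ 0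
  simp only [zero_add] at this
  simp [this]

theorem Bd_zero {L : ℝ} {K : ℝ} (hK : 0 ≤ K) {h : ℝ → ℝ → ℝ} (h0 : ∀ s ψ, h s ψ = 0) :
    Bd L h K := by
  unfold Bd FiniteL2 L2sq
  simp [h0, hK]

theorem descend {L : ℝ} (hL : 0 < L) {q : ℝ → ℝ} (hq : Continuous q) (hpos : ∀ s, 0 < q s)
    {h : ℝ → ℝ → ℝ} (hh : Smooth2 h) (hp : PeriodicS L h) {K0 : ℝ}
    (h0 : Bd L (fun _ ψ => ∫ s in (0:ℝ)..L, q s * h s ψ) K0) (j : ℕ)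
    (hj : FiniteL2 L (dS j h)) : FiniteL2 L h := by
  induction j with
  | zero => rwa [dS_zero] at hj
  | succ j ih =>
    rcases Nat.eq_zero_or_pos j with rfl | hjp
    · obtain ⟨C, hC, H⟩ := poincare_bd hL hq hpos
      exact (H h _ hh (hj.bd.mono (le_max_left _ K0)) (h0.mono (le_max_right _ _))).1
    · apply ih
      obtain ⟨i, rfl⟩ : ∃ i, j = i + 1 := ⟨j - 1, by omega⟩
      obtain ⟨C, hC, H⟩ := poincare_bd hL (ρ := fun _ => 1) continuous_const (fun _ => one_pos)
      refine (H (dS (i+1) h) (L2sq L (dS (i+1+1) h)) (hh.dSk _) ?_ ?_).1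
      · rw [← dS_succ]; exact hj.bd
      · apply Bd_zero hj.bd.nonneg
        intro s ψ
        simp only [one_mul]
        rw [dS_succ]
        exact int_dS1_zero (hh.dSk i) (hp.dSk i) ψ

theorem Gr_of_bd {L K : ℝ} (hL : 0 < L) {h : ℝ → ℝ → ℝ} (hh : Smooth2 h) (hb : Bd L h K) :
    Gr L h := by
  refine ⟨K, fun R hR => ?_⟩
  have h1 := hb.IR_le hL.le hh.cont (by linarith : (0:ℝ) ≤ R)
  have := hb.nonneg
  nlinarith [one_le_pow₀ hR (n := 2)]

theorem Gr_of_bdP {L K : ℝ} (hL : 0 < L) {h : ℝ → ℝ → ℝ} (hh : Smooth2 h)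
    (hb : Bd L (dPsi 1 h) K) : Gr L h := by
  have hK := hb.nonneg
  have hcb : Continuous fun s => h s 0 := (hh.slS 0).continuous
  have hB : 0 ≤ ∫ s in (0:ℝ)..L, h s 0 ^ 2 :=
    intervalIntegral.integral_nonneg hL.le fun s _ => sq_nonneg _
  refine ⟨2 * (∫ s in (0:ℝ)..L, h s 0 ^ 2) + 2 * K, fun R hR => ?_⟩
  have hR0 : (0:ℝ) ≤ R := by linarith
  have hc1 : Cont2 (dPsi 1 h) := hh.dP1.cont
  have hsw : Cont2 (fun a b => dPsi 1 h b a ^ 2) := by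
    have : Continuous (fun p : ℝ × ℝ => ((p.2, p.1) : ℝ × ℝ)) := by fun_prop
    exact (Continuous.comp (g := fun p : ℝ × ℝ => dPsi 1 h p.1 p.2) hc1 this).pow 2
  have hg : Continuous fun s => ∫ t in (0:ℝ)..R, dPsi 1 h s t ^ 2 := hsw.inner R
  have hgi : ∫ s in (0:ℝ)..L, ∫ t in (0:ℝ)..R, dPsi 1 h s t ^ 2 ≤ K := by
    have := hb.IR_le hL.le hc1 hR0
    unfold IR at this
    rwa [intervalIntegral_intervalIntegral_swap] at this
    rw [uIoc_of_le hL.le, uIoc_of_le hR0]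
    exact IR_integrableOn (h := fun a b => dPsi 1 h b a ^ 2) hsw
  have hcb2 : Continuous fun s => 2 * h s 0 ^ 2 := (hcb.pow 2).const_mul 2
  have hcont : Continuous fun s => 2 * h s 0 ^ 2 + 2 * R * ∫ t in (0:ℝ)..R, dPsi 1 h s t ^ 2 :=
    ((hcb.pow 2).const_mul 2 |>.add (hg.const_mul (2 * R)))
  have h1 : IR L R (fun s ψ => h s ψ ^ 2)
      ≤ IR L R (fun s _ => 2 * h s 0 ^ 2 + 2 * R * ∫ t in (0:ℝ)..R, dPsi 1 h s t ^ 2) := by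
    have hc3 : Cont2 (fun s _ => 2 * h s 0 ^ 2 + 2 * R * ∫ t in (0:ℝ)..R, dPsi 1 h s t ^ 2) :=
      hcont.comp continuous_fst
    apply IR_mono hL.le hR0 (Cont2.sq hh.cont) hc3
    intro s ψ h0 h1
    have := sq_sub_le (a := 0) (b := R) (x := 0) (y := ψ) ⟨le_rfl, hR0⟩ ⟨h0, h1⟩
      (fun x => hh.hP s x) (hc1.slP s)
    rw [sub_zero] at this
    nlinarith [sq_nonneg (h s ψ - 2 * h s 0)]
  refine h1.trans ?_
  unfold IR
  rw [intervalIntegral.integral_const, intervalIntegral.integral_add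
    (hcb2.intervalIntegrable _ _)
    ((hg.const_mul (2 * R)).intervalIntegrable _ _), intervalIntegral.integral_const_mul,
    intervalIntegral.integral_const_mul, sub_zero, smul_eq_mul]
  have e1 : R * (2 * R * ∫ s in (0:ℝ)..L, ∫ t in (0:ℝ)..R, dPsi 1 h s t ^ 2) ≤ R * (2 * R * K) := by
    gcongr
  nlinarith [mul_nonneg hB (by nlinarith : 0 ≤ R ^ 2 - R)]

theorem Gr_of_finite {L : ℝ} (hL : 0 < L) {q : ℝ → ℝ} (hq : ContDiff ℝ (⊤ : ℕ∞) q)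
    (hqper : Periodic q L) (hpos : ∀ s, 0 < q s)
    {ω : ℝ} (hω : 0 < ω) (m : ℕ) {Q F G : ℝ → ℝ → ℝ} (hQ : Smooth2 Q) (hper : PeriodicS L Q)
    (hF : Smooth2 F) (hG : Smooth2 G) (hpde : ∀ s : ℝ, ∀ ψ > (0:ℝ),
        dS 1 Q s ψ - ω * q s * dPsi 2 Q s ψ = F s ψ + dPsi 2 G s ψ)
    (hAl : Tendsto (fun ψ => ∫ s in (0:ℝ)..L, q s * Q s ψ) atTop (nhds 0))
    (hGl : Tendsto (fun ψ => ∫ s in (0:ℝ)..L, G s ψ) atTop (nhds 0))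
    {K : ℝ} (hFb : Bd L (wt (m + 4) F) K) (hGb : ∀ j ≤ 2, Bd L (wt m (dPsi j G)) K)
    (i j m' : ℕ) (hi : i ≤ 2) (hfin : FiniteL2 L (wt m' (dPsi i (dS j Q)))) : Gr L Q := by
  obtain ⟨C, hC, HZ⟩ := zeromode hL hq hω m
  have hz : ∀ i ≤ 2, Bd L (fun _ ψ => ∫ s in (0:ℝ)..L, q s * dPsi i Q s ψ) (C * K) := by
    intro i hi
    have := HZ Q F G K hQ hper hF hG hpde hAl hGl hFb hGb i hi
    have hc : Cont2 (fun s ψ => q s * dPsi i Q s ψ) := ((smooth2_s hq).mul (hQ.dPk i)).cont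
    have hc2 : Cont2 (fun _ ψ => ∫ s in (0:ℝ)..L, q s * dPsi i Q s ψ) :=
      (hc.inner L).comp continuous_snd
    have := this.wt_mono (Nat.zero_le m) hc2
    rwa [wt_zero] at this
  have hf1 : FiniteL2 L (dPsi i (dS j Q)) := by
    have := (hfin.bd.wt_mono (Nat.zero_le m') ((hQ.dSk j).dPk i).cont).1
    rwa [wt_zero] at this
  rw [← dS_dPsi_comm hQ] at hf1
  have hf2 := descend hL hq.continuous hpos (hQ.dPk i) (hper.dPk i) (hz i hi) j hf1
  obtain rfl | rfl | rfl : i = 0 ∨ i = 1 ∨ i = 2 := by omega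
  · rw [dPsi_zero] at hf2
    exact Gr_of_bd hL hQ hf2.bd
  · exact Gr_of_bdP hL hQ hf2.bd
  · obtain ⟨q0, q1, hq0, hqb⟩ := exists_bounds hL hq.continuous hqper hpos
    have hF0 := hFb.wt_mono (Nat.zero_le _) hF.cont
    have hG0 := (hGb 2 le_rfl).wt_mono (Nat.zero_le _) (hG.dPk 2).cont
    rw [wt_zero] at hF0 hG0
    have hs : Bd L (dS 1 Q) _ := Bd.le3 3 3 (3 * (ω * q1) ^ 2) (by norm_num) (by norm_num)
      (by positivity) hQ.dS1.cont hF0 hG0 hf2.bd (by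
        intro s ψ hψ
        have e := hpde s ψ hψ
        have e2 : dS 1 Q s ψ = F s ψ + dPsi 2 G s ψ + ω * q s * dPsi 2 Q s ψ := by linarith
        have e3 : (ω * q s * dPsi 2 Q s ψ) ^ 2 ≤ (ω * q1) ^ 2 * dPsi 2 Q s ψ ^ 2 := by
          rw [mul_pow]
          have := hpos s
          have := (hqb s).2
          gcongr
        rw [e2]
        nlinarith [sq_nonneg (F s ψ - dPsi 2 G s ψ),
          sq_nonneg (F s ψ - ω * q s * dPsi 2 Q s ψ),
          sq_nonneg (dPsi 2 G s ψ - ω * q s * dPsi 2 Q s ψ)])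
    have hz0 := hz 0 (by norm_num)
    rw [dPsi_zero] at hz0
    have := descend hL hq.continuous hpos hQ hper hz0 1 hs.1
    exact Gr_of_bd hL hQ this.bd

theorem dS_succ' (k : ℕ) (h : ℝ → ℝ → ℝ) : dS (k+1) h = dS k (dS 1 h) := by
  induction k with
  | zero => rw [dS_zero]
  | succ k ih => rw [dS_succ, ih, ← dS_succ]

theorem dS_add {f g : ℝ → ℝ → ℝ} (hf : Smooth2 f) (hg : Smooth2 g) (n : ℕ) :
    dS n (fun s ψ => f s ψ + g s ψ) = fun s ψ => dS n f s ψ + dS n g s ψ := by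
  induction n with
  | zero => simp only [dS_zero]
  | succ n ih =>
    rw [dS_succ, ih]
    funext s ψ
    rw [dS_succ n f, dS_succ n g]
    exact dS_of_hasDerivAt (((hf.dSk n).hS s ψ).add ((hg.dSk n).hS s ψ))

theorem dS_sub {f g : ℝ → ℝ → ℝ} (hf : Smooth2 f) (hg : Smooth2 g) (n : ℕ) :
    dS n (fun s ψ => f s ψ - g s ψ) = fun s ψ => dS n f s ψ - dS n g s ψ := by
  induction n with
  | zero => simp only [dS_zero]
  | succ n ih =>
    rw [dS_succ, ih]
    funext s ψ
    rw [dS_succ n f, dS_succ n g]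
    exact dS_of_hasDerivAt (((hf.dSk n).hS s ψ).sub ((hg.dSk n).hS s ψ))

theorem dS_cmul (c : ℝ) {f : ℝ → ℝ → ℝ} (hf : Smooth2 f) (n : ℕ) :
    dS n (fun s ψ => c * f s ψ) = fun s ψ => c * dS n f s ψ := by
  induction n with
  | zero => simp only [dS_zero]
  | succ n ih =>
    rw [dS_succ, ih]
    funext s ψ
    rw [dS_succ n f]
    exact dS_of_hasDerivAt (((hf.dSk n).hS s ψ).const_mul c)

theorem smooth_deriv {q : ℝ → ℝ} (hq : ContDiff ℝ (⊤ : ℕ∞) q) :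
    ContDiff ℝ (⊤ : ℕ∞) (deriv q) := by
  have := (hq.iterate_deriv 1)
  simpa using this

theorem periodic_deriv {q : ℝ → ℝ} {L : ℝ} (hq : Periodic q L) : Periodic (deriv q) L := by
  intro s
  rw [← deriv_comp_add_const]
  congr 1
  funext t
  exact hq t

theorem dS_mul_succ {q : ℝ → ℝ} (hq : ContDiff ℝ (⊤ : ℕ∞) q) {h : ℝ → ℝ → ℝ} (hh : Smooth2 h)
    (n : ℕ) : dS (n+1) (fun s ψ => q s * h s ψ) = fun s ψ =>
      dS n (fun s ψ => deriv q s * h s ψ) s ψ + dS n (fun s ψ => q s * dS 1 h s ψ) s ψ := by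
  rw [dS_succ', ← dS_add ((smooth2_s (smooth_deriv hq)).mul hh) ((smooth2_s hq).mul hh.dS1)]
  congr 1
  funext s ψ
  apply dS_of_hasDerivAt
  exact ((hq.differentiable (by simp)) s).hasDerivAt.mul (hh.hS s ψ)

theorem exists_abs {L : ℝ} (hL : 0 < L) {q : ℝ → ℝ} (hq : Continuous q) (hper : Periodic q L) :
    ∃ M > 0, ∀ s, q s ^ 2 ≤ M := by
  obtain ⟨q0, q1, h0, h1⟩ := exists_bounds hL (q := fun s => q s ^ 2 + 1) (by fun_prop)
    (fun s => by simp only [hper s]) (fun s => by positivity)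
  exact ⟨q1, lt_of_lt_of_le h0 ((h1 0).1.trans (h1 0).2), fun s => by linarith [(h1 s).2]⟩

theorem prod_bd {L : ℝ} (hL : 0 < L) (m n : ℕ) : ∀ {q : ℝ → ℝ}, ContDiff ℝ (⊤ : ℕ∞) q →
    Periodic q L → ∃ C > (0:ℝ), ∀ (h : ℝ → ℝ → ℝ) (K : ℝ), Smooth2 h →
      (∀ j ≤ n, Bd L (wt m (dS j h)) K) →
      Bd L (wt m (dS n (fun s ψ => q s * h s ψ))) (C * K) := by
  induction n with
  | zero =>
    intro q hq hper
    obtain ⟨M, hM, HM⟩ := exists_abs hL hq.continuous hper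
    refine ⟨M, hM, fun h K hh H => ?_⟩
    have h0 := H 0 le_rfl
    rw [dS_zero] at h0 ⊢
    refine Bd.le1 M hM.le (((smooth2_s hq).mul hh).wt m).cont h0 ?_
    intro s ψ _
    have e : wt m (fun s ψ => q s * h s ψ) s ψ ^ 2 = q s ^ 2 * wt m h s ψ ^ 2 := by
      unfold wt; ring
    rw [e]
    gcongr
    exact HM s
  | succ n ih =>
    intro q hq hper
    obtain ⟨C1, hC1, H1⟩ := ih (smooth_deriv hq) (periodic_deriv hper)
    obtain ⟨C2, hC2, H2⟩ := ih hq hper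
    refine ⟨2 * C1 + 2 * C2, by positivity, fun h K hh H => ?_⟩
    have b1 := H1 h K hh (fun j hj => H j (by omega))
    have b2 := H2 (dS 1 h) K hh.dS1 (fun j hj => by rw [← dS_succ']; exact H (j+1) (by omega))
    refine (Bd.le2 2 2 (by norm_num) (by norm_num)
      ((((smooth2_s hq).mul hh).dSk (n+1)).wt m).cont b1 b2 ?_).mono (by linarith)
    intro s ψ _
    rw [dS_mul_succ hq hh]
    unfold wt
    nlinarith [sq_nonneg ((1 + ψ) ^ m * dS n (fun s ψ => deriv q s * h s ψ) s ψ
      - (1 + ψ) ^ m * dS n (fun s ψ => q s * dS 1 h s ψ) s ψ)]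

theorem comm_bd {L : ℝ} (hL : 0 < L) (m n : ℕ) {q : ℝ → ℝ} (hq : ContDiff ℝ (⊤ : ℕ∞) q)
    (hper : Periodic q L) : ∃ C > (0:ℝ), ∀ (h : ℝ → ℝ → ℝ) (K : ℝ), 0 ≤ K → Smooth2 h →
      (∀ j < n, Bd L (wt m (dS j h)) K) →
      Bd L (wt m (fun s ψ => dS n (fun s ψ => q s * h s ψ) s ψ - q s * dS n h s ψ)) (C * K) := by
  induction n with
  | zero =>
    refine ⟨1, one_pos, fun h K hK hh H => ?_⟩
    apply Bd_zero (by linarith)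
    intro s ψ
    simp [wt, dS_zero]
  | succ n ih =>
    obtain ⟨C1, hC1, H1⟩ := prod_bd hL m n (smooth_deriv hq) (periodic_deriv hper)
    obtain ⟨C2, hC2, H2⟩ := ih
    refine ⟨2 * C1 + 2 * C2, by positivity, fun h K hK hh H => ?_⟩
    have b1 := H1 h K hh (fun j hj => H j (by omega))
    have b2 := H2 (dS 1 h) K hK hh.dS1
      (fun j hj => by rw [← dS_succ']; exact H (j+1) (by omega))
    refine (Bd.le2 2 2 (by norm_num) (by norm_num)
      (((((smooth2_s hq).mul hh).dSk (n+1)).sub ((smooth2_s hq).mul (hh.dSk (n+1)))).wt m).cont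
      b1 b2 ?_).mono (by linarith)
    intro s ψ _
    rw [dS_mul_succ hq hh, dS_succ' n h]
    unfold wt
    nlinarith [sq_nonneg ((1 + ψ) ^ m * dS n (fun s ψ => deriv q s * h s ψ) s ψ
      - (1 + ψ) ^ m * (dS n (fun s ψ => q s * dS 1 h s ψ) s ψ - q s * dS n (dS 1 h) s ψ))]

theorem periodic_iter {b : ℝ → ℝ} {L : ℝ} (hb : Periodic b L) (n : ℕ) :
    Periodic (iteratedDeriv n b) L := by
  induction n with
  | zero => simpa using hb
  | succ n ih => rw [iteratedDeriv_succ]; exact periodic_deriv ih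

theorem smooth_iter {b : ℝ → ℝ} (hb : ContDiff ℝ (⊤ : ℕ∞) b) (n : ℕ) :
    ContDiff ℝ (⊤ : ℕ∞) (iteratedDeriv n b) := by
  induction n with
  | zero => simpa using hb
  | succ n ih => rw [iteratedDeriv_succ]; exact smooth_deriv ih

theorem dS_pde {q : ℝ → ℝ} (hq : ContDiff ℝ (⊤ : ℕ∞) q) {ω : ℝ} {Q F G : ℝ → ℝ → ℝ}
    (hQ : Smooth2 Q) (hF : Smooth2 F) (hG : Smooth2 G) (hpde : ∀ s : ℝ, ∀ ψ > (0:ℝ),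
        dS 1 Q s ψ - ω * q s * dPsi 2 Q s ψ = F s ψ + dPsi 2 G s ψ) (n : ℕ) (s ψ : ℝ)
    (hψ : 0 < ψ) :
    dS (n+1) Q s ψ - ω * dS n (fun s ψ => q s * dPsi 2 Q s ψ) s ψ
      = dS n F s ψ + dPsi 2 (dS n G) s ψ := by
  have e1 : dS n (fun s ψ => F s ψ + dPsi 2 G s ψ) s ψ
      = dS n (fun s ψ => dS 1 Q s ψ - ω * (q s * dPsi 2 Q s ψ)) s ψ := by
    unfold dS
    congr 1
    funext s'
    have := hpde s' ψ hψ
    unfold dS at this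
    beta_reduce
    rw [← this]
    ring
  have hsq : Smooth2 (fun s ψ => q s * dPsi 2 Q s ψ) := (smooth2_s hq).mul (hQ.dPk 2)
  have hsq2 : Smooth2 (fun s ψ => ω * (q s * dPsi 2 Q s ψ)) :=
    (smooth2_s (f := fun _ => ω) contDiff_const).mul hsq
  rw [dS_add hF (hG.dPk 2), dS_sub hQ.dS1 hsq2, dS_cmul ω hsq, ← dS_succ',
    dS_dPsi_comm hG] at e1
  exact e1.symm

theorem main_k {L : ℝ} (hL : 0 < L) {q : ℝ → ℝ} (hq : ContDiff ℝ (⊤ : ℕ∞) q)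
    (hqper : Periodic q L) (hpos : ∀ s, 0 < q s)
    {ω : ℝ} (hω : 0 < ω) (m n : ℕ) :
    ∃ C > (0:ℝ), ∀ (Q F G : ℝ → ℝ → ℝ) (b : ℝ → ℝ) (K : ℝ), Smooth2 Q → PeriodicS L Q →
      Smooth2 F → Smooth2 G → ContDiff ℝ (⊤ : ℕ∞) b → Periodic b L →
      (∀ s : ℝ, ∀ ψ > (0:ℝ),
        dS 1 Q s ψ - ω * q s * dPsi 2 Q s ψ = F s ψ + dPsi 2 G s ψ) →
      (∀ s, Q s 0 = b s) →
      Tendsto (fun ψ => ∫ s in (0:ℝ)..L, q s * Q s ψ) atTop (nhds 0) →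
      Tendsto (fun ψ => ∫ s in (0:ℝ)..L, G s ψ) atTop (nhds 0) → Gr L Q →
      (∀ k' ≤ n, Bd L (wt (m + 4) (dS k' F)) K) →
      (∀ k' ≤ n, ∀ j ≤ 2, Bd L (wt m (dPsi j (dS k' G))) K) →
      (∀ j ≤ n + 1, (∫ s in (0:ℝ)..L, iteratedDeriv j b s ^ 2) ≤ K) →
      ∀ k' ≤ n, Bd L (wt m (dS k' Q)) (C * K) ∧ Bd L (wt m (dS (k' + 1) Q)) (C * K) ∧
        Bd L (wt m (dPsi 1 (dS k' Q))) (C * K) ∧ Bd L (wt m (dPsi 2 (dS k' Q))) (C * K) := by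
  obtain ⟨q0, q1, hq0, hqb⟩ := exists_bounds hL hq.continuous hqper hpos
  induction n with
  | zero =>
    obtain ⟨CZ, hCZ, HZ⟩ := zeromode hL hq hω m
    obtain ⟨CL, hCL, HL⟩ := level hL hq.continuous hq0 hqb hω hq.continuous hpos m
    refine ⟨CL * (4 + CZ), by positivity, ?_⟩
    intro Q F G b K hQ hper hF hG hb hbper hpde hQb hAl hGl hgr hFb hGb hbb k' hk'
    obtain rfl : k' = 0 := by omega
    have hF0 := hFb 0 le_rfl
    have hG0 := hGb 0 le_rfl
    rw [dS_zero] at hF0 hG0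
    have hK := hF0.nonneg
    have hz := HZ Q F G K hQ hper hF hG hpde hAl hGl hF0 hG0 0 (by norm_num)
    rw [dPsi_zero] at hz
    have hf : Bd L (wt m (fun s ψ => dS 1 Q s ψ - ω * q s * dPsi 2 Q s ψ)) (2 * K + 2 * K) := by
      have hsm : Smooth2 (fun s ψ => dS 1 Q s ψ - ω * q s * dPsi 2 Q s ψ) :=
        hQ.dS1.sub ((smooth2_s (f := fun s => ω * q s) (contDiff_const.mul hq)).mul (hQ.dPk 2))
      refine Bd.le2 2 2 (by norm_num) (by norm_num) (hsm.wt m).cont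
        (hF0.wt_mono (by omega : m ≤ m + 4) hF.cont) (hG0 2 le_rfl) ?_
      intro s ψ hψ
      unfold wt
      beta_reduce
      rw [hpde s ψ hψ]
      nlinarith [sq_nonneg ((1 + ψ) ^ m * F s ψ - (1 + ψ) ^ m * dPsi 2 G s ψ)]
    have hb0 := hbb 0 (by omega)
    have hb1 := hbb 1 (by omega)
    rw [iteratedDeriv_zero] at hb0
    rw [iteratedDeriv_one] at hb1
    have hCK : 0 ≤ CZ * K := by positivity
    have := HL Q b ((4 + CZ) * K) hQ hper hb hbper hQb hgr (hf.mono (by linarith))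
      (hz.mono (by linarith)) (by linarith) (by linarith)
    rw [dS_zero, zero_add, mul_assoc]
    exact this
  | succ n ih =>
    obtain ⟨C0, hC0, H0⟩ := ih
    obtain ⟨CC, hCC, HC⟩ := comm_bd hL m (n+1) hq hqper
    obtain ⟨CL, hCL, HL⟩ := level hL hq.continuous hq0 hqb hω (ρ := fun _ => 1) continuous_const
      (fun _ => one_pos) m
    refine ⟨C0 + CL * (6 + 3 * ω ^ 2 * (CC * C0)), by positivity, ?_⟩
    intro Q F G b K hQ hper hF hG hb hbper hpde hQb hAl hGl hgr hFb hGb hbb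
    have hK := (hFb 0 (by omega)).nonneg
    have h0 := H0 Q F G b K hQ hper hF hG hb hbper hpde hQb hAl hGl hgr
      (fun k' hk => hFb k' (by omega)) (fun k' hk => hGb k' (by omega))
      (fun j hj => hbb j (by omega))
    have hle : C0 * K ≤ (C0 + CL * (6 + 3 * ω ^ 2 * (CC * C0))) * K := by
      gcongr
      have : 0 ≤ CL * (6 + 3 * ω ^ 2 * (CC * C0)) := by positivity
      linarith
    have hgr2 : Gr L (dS (n+1) Q) := by
      have := ((h0 n le_rfl).2.1).wt_mono (Nat.zero_le m) (hQ.dSk (n+1)).cont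
      rw [wt_zero] at this
      exact Gr_of_bd hL (hQ.dSk _) this
    have hcm := HC (dPsi 2 Q) (C0 * K) (by positivity) (hQ.dPk 2) (fun j hj => by
      rw [dS_dPsi_comm hQ]
      exact (h0 j (by omega)).2.2.2)
    have hf : Bd L (wt m (fun s ψ => dS 1 (dS (n+1) Q) s ψ
        - ω * q s * dPsi 2 (dS (n+1) Q) s ψ)) (3 * K + 3 * K + 3 * ω ^ 2 * (CC * (C0 * K))) := by
      have hsm : Smooth2 (fun s ψ => dS 1 (dS (n+1) Q) s ψ
          - ω * q s * dPsi 2 (dS (n+1) Q) s ψ) :=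
        (hQ.dSk (n+1)).dS1.sub ((smooth2_s (f := fun s => ω * q s)
          (contDiff_const.mul hq)).mul ((hQ.dSk (n+1)).dPk 2))
      refine Bd.le3 3 3 (3 * ω ^ 2) (by norm_num) (by norm_num) (by positivity) (hsm.wt m).cont
        ((hFb (n+1) le_rfl).wt_mono (by omega : m ≤ m + 4) (hF.dSk _).cont)
        (hGb (n+1) le_rfl 2 le_rfl) hcm ?_
      intro s ψ hψ
      have e := dS_pde hq hQ hF hG hpde (n+1) s ψ hψ
      rw [dS_succ (n+1)] at e
      unfold wt
      rw [dS_dPsi_comm hQ]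
      beta_reduce
      generalize dS 1 (dS (n+1) Q) s ψ = x at *
      generalize dPsi 2 (dS (n+1) Q) s ψ = y at *
      generalize dS (n+1) F s ψ = f at *
      generalize dPsi 2 (dS (n+1) G) s ψ = g at *
      generalize dS (n+1) (fun s ψ => q s * dPsi 2 Q s ψ) s ψ = z at *
      have ex : x - ω * q s * y = f + g + ω * (z - q s * y) := by linarith
      rw [ex]
      generalize z - q s * y = c
      generalize (1 + ψ) ^ m = w
      nlinarith [sq_nonneg (w * f - w * g), sq_nonneg (w * f - w * (ω * c)),
        sq_nonneg (w * g - w * (ω * c))]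
    have hCK : 0 ≤ 3 * ω ^ 2 * (CC * C0) * K := by positivity
    have hb0 := hbb (n+1) (by omega)
    have hb1 := hbb (n+1+1) (by omega)
    rw [iteratedDeriv_succ (n := n+1)] at hb1
    have hlev := HL (dS (n+1) Q) (iteratedDeriv (n+1) b) ((6 + 3 * ω ^ 2 * (CC * C0)) * K)
      (hQ.dSk _) (hper.dSk _) (smooth_iter hb _) (periodic_iter hbper _)
      (fun s => by
        unfold dS
        congr 1
        funext s'
        exact hQb s') hgr2 (hf.mono (by linarith))
      (by
        apply Bd_zero (by positivity)
        intro s ψ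
        unfold wt
        simp only [one_mul]
        rw [dS_succ, int_dS1_zero (hQ.dSk n) (hper.dSk n) ψ, mul_zero])
      (by linarith) (by linarith)
    have hle2 : CL * ((6 + 3 * ω ^ 2 * (CC * C0)) * K)
        ≤ (C0 + CL * (6 + 3 * ω ^ 2 * (CC * C0))) * K := by
      have : 0 ≤ C0 * K := by positivity
      linarith
    intro k' hk'
    rcases Nat.lt_or_ge k' (n+1) with h | h
    · obtain ⟨a1, a2, a3, a4⟩ := h0 k' (by omega)
      exact ⟨a1.mono hle, a2.mono hle, a3.mono hle, a4.mono hle⟩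
    · obtain rfl : k' = n + 1 := by omega
      obtain ⟨a1, a2, a3, a4⟩ := hlev
      rw [dS_succ (n+1)]
      exact ⟨a1.mono hle2, a2.mono hle2, a3.mono hle2, a4.mono hle2⟩

theorem L2sq_nonneg (L : ℝ) (h : ℝ → ℝ → ℝ) : 0 ≤ L2sq L h :=
  integral_nonneg fun _ => sq_nonneg _

theorem le_sq_of_sqrt_le {x D : ℝ} (h : Real.sqrt x ≤ D) : x ≤ D ^ 2 := by
  have hD : 0 ≤ D := (Real.sqrt_nonneg x).trans h
  exact (Real.sqrt_le_left hD).mp h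

/-- **Full a priori estimate for the abstract linear Prandtl system (Prop. 5.1).** -/
theorem linear_prandtl_full_estimate
    (L : ℝ) (hL : 0 < L)
    (q_e : ℝ → ℝ) (hqe : ContDiff ℝ (⊤ : ℕ∞) q_e) (hqeper : Function.Periodic q_e L)
    (hqepos : ∀ s, 0 < q_e s)
    (ω₀ : ℝ) (hω₀ : 0 < ω₀) (k m : ℕ) :
    ∃ C > (0:ℝ), ∀ Q F G : ℝ → ℝ → ℝ, ∀ b : ℝ → ℝ,
      Smooth2 Q → PeriodicS L Q → Smooth2 F → PeriodicS L F →
      Smooth2 G → PeriodicS L G → ContDiff ℝ (⊤ : ℕ∞) b → Function.Periodic b L →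
      (∀ s : ℝ, ∀ ψ > (0:ℝ),
        dS 1 Q s ψ - ω₀ * q_e s * dPsi 2 Q s ψ = F s ψ + dPsi 2 G s ψ) →
      (∀ s : ℝ, Q s 0 = b s) →
      (∀ s : ℝ, Tendsto (fun ψ => Q s ψ) atTop (nhds 0)) →
      Tendsto (fun ψ => ∫ s in (0:ℝ)..L, q_e s * Q s ψ) atTop (nhds 0) →
      Tendsto (fun ψ => deriv (fun ψ' => ∫ s in (0:ℝ)..L, q_e s * Q s ψ') ψ)
        atTop (nhds 0) →
      Tendsto (fun ψ => ∫ s in (0:ℝ)..L, G s ψ) atTop (nhds 0) →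
      -- Feynman–Lagerstrom compatibility condition
      ((∫ s in (0:ℝ)..L, q_e s * b s)
        = -(1 / ω₀) * ((∫ y in Ioi (0:ℝ), y * ∫ s in (0:ℝ)..L, F s y)
            + ∫ s in (0:ℝ)..L, G s 0)) →
      -- finiteness of the right-hand side
      (∀ k' ≤ k, FiniteL2 L (wt (m+4) (dS k' F))) →
      (∀ k' ≤ k, ∀ j ≤ 2, FiniteL2 L (wt m (dPsi j (dS k' G)))) →
      Xnorm L k m Q
        ≤ C * ((∑ k' ∈ Finset.range (k+1),
              Real.sqrt (L2sq L (wt (m+4) (dS k' F))))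
            + (∑ k' ∈ Finset.range (k+1), ∑ j ∈ Finset.range 3,
              Real.sqrt (L2sq L (wt m (dPsi j (dS k' G)))))
            + Real.sqrt (HnormSq L (k+1) b)) := by
  obtain ⟨C, hC, H⟩ := main_k hL hqe hqeper hqepos hω₀ m k
  refine ⟨Real.sqrt (((k:ℝ)+1) * (((m:ℝ)+1) * (4 * C))), by positivity, ?_⟩
  intro Q F G b hQ hQp hF hFp hG hGp hb hbp hpde hbc _ hAl _ hGl _ hFf hGf
  have hD1 : ∀ k' ≤ k, Real.sqrt (L2sq L (wt (m+4) (dS k' F)))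
      ≤ ∑ k' ∈ Finset.range (k+1), Real.sqrt (L2sq L (wt (m+4) (dS k' F))) := fun k' hk =>
    Finset.single_le_sum (f := fun k' => Real.sqrt (L2sq L (wt (m+4) (dS k' F))))
      (fun _ _ => Real.sqrt_nonneg _) (Finset.mem_range.mpr (by omega))
  have hD2 : ∀ k' ≤ k, ∀ j ≤ 2, Real.sqrt (L2sq L (wt m (dPsi j (dS k' G))))
      ≤ ∑ k' ∈ Finset.range (k+1), ∑ j ∈ Finset.range 3,
        Real.sqrt (L2sq L (wt m (dPsi j (dS k' G)))) := fun k' hk j hj =>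
    (Finset.single_le_sum (f := fun j => Real.sqrt (L2sq L (wt m (dPsi j (dS k' G)))))
      (fun _ _ => Real.sqrt_nonneg _) (Finset.mem_range.mpr (by omega : j < 3))).trans
    (Finset.single_le_sum (f := fun k' => ∑ j ∈ Finset.range 3,
        Real.sqrt (L2sq L (wt m (dPsi j (dS k' G)))))
      (fun _ _ => Finset.sum_nonneg fun _ _ => Real.sqrt_nonneg _)
      (Finset.mem_range.mpr (by omega)))
  have hD3 : ∀ j ≤ k + 1, (∫ s in (0:ℝ)..L, iteratedDeriv j b s ^ 2) ≤ HnormSq L (k+1) b :=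
    fun j hj => Finset.single_le_sum (f := fun j => ∫ s in (0:ℝ)..L, iteratedDeriv j b s ^ 2)
      (fun _ _ => intervalIntegral.integral_nonneg hL.le fun _ _ => sq_nonneg _)
      (Finset.mem_range.mpr (by omega))
  have hp1 : 0 ≤ ∑ k' ∈ Finset.range (k+1), Real.sqrt (L2sq L (wt (m+4) (dS k' F))) :=
    Finset.sum_nonneg fun _ _ => Real.sqrt_nonneg _
  have hp2 : 0 ≤ ∑ k' ∈ Finset.range (k+1), ∑ j ∈ Finset.range 3,
        Real.sqrt (L2sq L (wt m (dPsi j (dS k' G)))) :=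
    Finset.sum_nonneg fun _ _ => Finset.sum_nonneg fun _ _ => Real.sqrt_nonneg _
  have hp3 := Real.sqrt_nonneg (HnormSq L (k+1) b)
  obtain ⟨D, hD⟩ : ∃ D, D = (∑ k' ∈ Finset.range (k+1),
              Real.sqrt (L2sq L (wt (m+4) (dS k' F))))
            + (∑ k' ∈ Finset.range (k+1), ∑ j ∈ Finset.range 3,
              Real.sqrt (L2sq L (wt m (dPsi j (dS k' G)))))
            + Real.sqrt (HnormSq L (k+1) b) := ⟨_, rfl⟩
  rw [← hD]
  have hD0 : 0 ≤ D := by rw [hD]; linarith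
  have hFb : ∀ k' ≤ k, Bd L (wt (m+4) (dS k' F)) (D ^ 2) := fun k' hk =>
    ⟨hFf k' hk, le_sq_of_sqrt_le (by have := hD1 k' hk; linarith)⟩
  have hGb : ∀ k' ≤ k, ∀ j ≤ 2, Bd L (wt m (dPsi j (dS k' G))) (D ^ 2) := fun k' hk j hj =>
    ⟨hGf k' hk j hj, le_sq_of_sqrt_le (by have := hD2 k' hk j hj; linarith)⟩
  have hbb : ∀ j ≤ k + 1, (∫ s in (0:ℝ)..L, iteratedDeriv j b s ^ 2) ≤ D ^ 2 := fun j hj =>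
    (hD3 j hj).trans (le_sq_of_sqrt_le (by linarith))
  have key : ∀ k' ≤ k, ∀ m' ≤ m, L2sq L (wt m' (dS k' Q)) ≤ C * D ^ 2 ∧
      L2sq L (wt m' (dS (k'+1) Q)) ≤ C * D ^ 2 ∧ L2sq L (wt m' (dPsi 1 (dS k' Q))) ≤ C * D ^ 2 ∧
      L2sq L (wt m' (dPsi 2 (dS k' Q))) ≤ C * D ^ 2 := by
    intro k' hk m' hm
    by_cases hgr : Gr L Q
    · obtain ⟨a1, a2, a3, a4⟩ := H Q F G b (D ^ 2) hQ hQp hF hG hb hbp hpde hbc hAl hGl hgr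
        hFb hGb hbb k' hk
      exact ⟨(a1.wt_mono hm (hQ.dSk _).cont).2, (a2.wt_mono hm (hQ.dSk _).cont).2,
        (a3.wt_mono hm ((hQ.dSk _).dPk 1).cont).2, (a4.wt_mono hm ((hQ.dSk _).dPk 2).cont).2⟩
    · have hF0 := hFb 0 (by omega)
      have hG0 := hGb 0 (by omega)
      rw [dS_zero] at hF0 hG0
      have hz : ∀ i ≤ 2, ∀ j, L2sq L (wt m' (dPsi i (dS j Q))) ≤ C * D ^ 2 := by
        intro i hi j
        have : ¬ FiniteL2 L (wt m' (dPsi i (dS j Q))) := fun hfin =>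
          hgr (Gr_of_finite hL hqe hqeper hqepos hω₀ m hQ hQp hF hG hpde hAl hGl hF0 hG0
            i j m' hi hfin)
        have e : L2sq L (wt m' (dPsi i (dS j Q))) = 0 := integral_undef this
        rw [e]
        positivity
      have h0 := hz 0 (by norm_num) k'
      have h1 := hz 0 (by norm_num) (k'+1)
      rw [dPsi_zero] at h0 h1
      exact ⟨h0, h1, hz 1 (by norm_num) k', hz 2 le_rfl k'⟩
  have hX : XnormSq L k m Q ≤ (((k:ℝ)+1) * (((m:ℝ)+1) * (4 * C))) * D ^ 2 := by
    have e : XnormSq L k m Q ≤ ∑ k' ∈ Finset.range (k+1), ∑ m' ∈ Finset.range (m+1),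
        4 * (C * D ^ 2) := by
      unfold XnormSq
      refine Finset.sum_le_sum fun k' hk => Finset.sum_le_sum fun m' hm => ?_
      obtain ⟨a1, a2, a3, a4⟩ := key k' (by have := Finset.mem_range.mp hk; omega) m'
        (by have := Finset.mem_range.mp hm; omega)
      linarith
    refine e.trans (le_of_eq ?_)
    simp only [Finset.sum_const, Finset.card_range, nsmul_eq_mul]
    push_cast
    ring
  unfold Xnorm
  calc Real.sqrt (XnormSq L k m Q)
      ≤ Real.sqrt ((((k:ℝ)+1) * (((m:ℝ)+1) * (4 * C))) * D ^ 2) := Real.sqrt_le_sqrt hX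
    _ = _ := by rw [Real.sqrt_mul (by positivity), Real.sqrt_sq hD0]
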